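/- arXiv:2201.01402 — 4 statements merged into one kernel-verified Lean document; each statement's English description precedes it below -/
import Mathlib

section
/- For any positive integer r ≥ 2 and integers k₂,…,k_r ≥ 1 with k_r ≥ 2, the shuffle-type identity holds: ζ_{(r,1)}((2,k₂,…,k_r);2) · ζ(2) = E₁ + 2E₂ + 2E₃ + 2A + 2B + 2C + 4D, where ζ_{(r,1)}((2,k₂,…,k_r);2) = Σ over a ≤ b₂ ≤ ⋯ ≤ b_r, a < c of 1/(a² b₂^{k₂} ⋯ b_r^{k_r} c²); E₁ = Σ over the same tableaux and m ≥ 1 of (∏ b_j^{-k_j}) / (m²(m+a)²(m+c)²); E₂ = Σ with summand (∏ b_j^{-k_j})/(m(m+a)³(m+c)²); E₃ = Σ with summand (∏ b_j^{-k_j})/(m(m+a)²(m+c)³); A, B, C, D are the hook-(r,1,1) Schur multiple zeta values with column exponents (2,2,2), (1,3,2), (1,2,3), (2,1,3) respectively and row exponents (k₂,…,k_r), i.e., A = Σ over m < a < c (column) , a ≤ b₂ ≤ ⋯ ≤ b_r of 1/(m² a² c² ∏ b_j^{k_j}), etc. -/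
open scoped BigOperators

/-- Product `∏_j b_j^{-k_j}` over the row entries `b₂ ≤ ⋯ ≤ b_r`. -/
noncomputable def rowProd {n : ℕ} (k : Fin n → ℕ) (b : Fin n → ℕ) : ℝ :=
  (∏ j, ((b j : ℝ)) ^ (k j))⁻¹

/-- Hook `(r,1)` Schur MZV with exponents `(u, k₂,…,k_r ; v)`:
`Σ_{a ≤ b₂ ≤ ⋯ ≤ b_r, a < c} a^{-u} c^{-v} ∏ b_j^{-k_j}`. -/
noncomputable def hookR1 {n : ℕ} (k : Fin n → ℕ) (u v : ℕ) : ℝ :=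
  ∑' x : {x : (ℕ × ℕ) × (Fin n → ℕ) //
      0 < x.1.1 ∧ x.1.1 < x.1.2 ∧ Monotone x.2 ∧ ∀ j, x.1.1 ≤ x.2 j},
    ((x.1.1.1 : ℝ) ^ u * (x.1.1.2 : ℝ) ^ v)⁻¹ * rowProd k x.1.2

/-- Hook `(r,1,1)` Schur MZV with column exponents `(u,v,w)` (top to bottom) and row
exponents `k`: `Σ_{m < a < c, m ≤ b₂ ≤ ⋯ ≤ b_r} m^{-u} a^{-v} c^{-w} ∏ b_j^{-k_j}`. -/
noncomputable def hookR11 {n : ℕ} (k : Fin n → ℕ) (u v w : ℕ) : ℝ :=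
  ∑' x : {x : (ℕ × ℕ × ℕ) × (Fin n → ℕ) //
      0 < x.1.1 ∧ x.1.1 < x.1.2.1 ∧ x.1.2.1 < x.1.2.2 ∧ Monotone x.2 ∧ ∀ j, x.1.1 ≤ x.2 j},
    ((x.1.1.1 : ℝ) ^ u * (x.1.1.2.1 : ℝ) ^ v * (x.1.1.2.2 : ℝ) ^ w)⁻¹ * rowProd k x.1.2

/-- Shifted ("elementary factorial") series
`Σ_{m ≥ 1, a ≤ b₂ ≤ ⋯ ≤ b_r, a < c} m^{-t} (m+a)^{-u} (m+c)^{-v} ∏ b_j^{-k_j}`. -/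
noncomputable def efR1 {n : ℕ} (k : Fin n → ℕ) (t u v : ℕ) : ℝ :=
  ∑' x : {x : (ℕ × ℕ × ℕ) × (Fin n → ℕ) //
      0 < x.1.1 ∧ 0 < x.1.2.1 ∧ x.1.2.1 < x.1.2.2 ∧ Monotone x.2 ∧ ∀ j, x.1.2.1 ≤ x.2 j},
    ((x.1.1.1 : ℝ) ^ t * ((x.1.1.1 + x.1.1.2.1 : ℕ) : ℝ) ^ u
        * ((x.1.1.1 + x.1.1.2.2 : ℕ) : ℝ) ^ v)⁻¹ * rowProd k x.1.2

/-- A product of copies of a nonnegative summable function is summable over tuples. -/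
theorem summable_prod_fin {f : ℕ → ℝ} (hf : Summable f) (h0 : 0 ≤ f) (n : ℕ) :
    Summable fun b : Fin n → ℕ => ∏ j, f (b j) := by
  induction n with
  | zero => exact Summable.of_finite
  | succ n ih =>
    rw [← (Fin.consEquiv fun _ : Fin (n + 1) => ℕ).summable_iff]
    refine (hf.mul_of_nonneg ih h0 fun b => Finset.prod_nonneg fun j _ => h0 _).congr fun x => ?_
    simp [Fin.prod_univ_succ]

theorem rowProd_nonneg {n : ℕ} (k b : Fin n → ℕ) : 0 ≤ rowProd k b := by
  unfold rowProd; positivity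

/-- On weakly increasing positive rows, `rowProd` is dominated by a product of powers with
exponent larger than `1`. -/
theorem rowProd_le_prod_rpow {n : ℕ} {l : Fin n} (hl : ∀ j, j ≤ l) {k : Fin n → ℕ}
    (hk : ∀ j, 1 ≤ k j) (hlast : 2 ≤ k l) {b : Fin n → ℕ} (hb : Monotone b) (hpos : ∀ j, 0 < b j) :
    rowProd k b ≤ ∏ j, ((b j : ℝ) ^ (1 + 1 / (n : ℝ)))⁻¹ := by
  have hb1 : ∀ j, (1 : ℝ) ≤ b j := fun j => by exact_mod_cast hpos j
  have hb0 : ∀ j, (0 : ℝ) < b j := fun j => by exact_mod_cast hpos j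
  have hn0 : (n : ℝ) ≠ 0 := Nat.cast_ne_zero.2 l.pos.ne'
  rw [rowProd, Finset.prod_inv_distrib]
  refine inv_anti₀ (Finset.prod_pos fun j _ => Real.rpow_pos_of_pos (hb0 j) _) ?_
  calc ∏ j, (b j : ℝ) ^ (1 + 1 / (n : ℝ))
      = (∏ j, (b j : ℝ)) * ∏ j, (b j : ℝ) ^ (1 / (n : ℝ)) := by
        rw [← Finset.prod_mul_distrib]
        refine Finset.prod_congr rfl fun j _ => ?_
        rw [Real.rpow_add (hb0 j), Real.rpow_one]
    _ ≤ (∏ j, (b j : ℝ)) * ∏ _j : Fin n, (b l : ℝ) ^ (1 / (n : ℝ)) := by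
        gcongr with j
        exact hb (hl j)
    _ = (∏ j, (b j : ℝ)) * b l := by
        rw [Finset.prod_const, Finset.card_univ, Fintype.card_fin, ← Real.rpow_mul_natCast
          (hb0 l).le, one_div_mul_cancel hn0, Real.rpow_one]
    _ = ∏ j, ((b j : ℝ) * if j = l then (b l : ℝ) else 1) := by
        rw [Finset.prod_mul_distrib, Finset.prod_ite_eq' Finset.univ l, if_pos (Finset.mem_univ l)]
    _ ≤ ∏ j, (b j : ℝ) ^ k j := by
        refine Finset.prod_le_prod (fun j _ => ?_) fun j _ => ?_
        · split_ifs <;> positivity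
        · split_ifs with h
          · rw [h, ← sq]
            exact pow_le_pow_right₀ (hb1 l) hlast
          · rw [mul_one]
            exact le_self_pow₀ (hb1 j) (Nat.one_le_iff_ne_zero.1 (hk j))

/-- The series defining `hookR1 k 2 2` converges. -/
theorem summable_hookR1_two_two {n : ℕ} {l : Fin n} (hl : ∀ j, j ≤ l) {k : Fin n → ℕ}
    (hk : ∀ j, 1 ≤ k j) (hlast : 2 ≤ k l) :
    Summable fun x : {x : (ℕ × ℕ) × (Fin n → ℕ) //
      0 < x.1.1 ∧ x.1.1 < x.1.2 ∧ Monotone x.2 ∧ ∀ j, x.1.1 ≤ x.2 j} =>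
    ((x.1.1.1 : ℝ) ^ 2 * (x.1.1.2 : ℝ) ^ 2)⁻¹ * rowProd k x.1.2 := by
  have hn : 0 < n := l.pos
  have h2 : Summable fun a : ℕ => ((a : ℝ) ^ 2)⁻¹ := Real.summable_nat_pow_inv.2 one_lt_two
  have hrow := summable_prod_fin (f := fun a : ℕ => ((a : ℝ) ^ (1 + 1 / (n : ℝ)))⁻¹)
    (Real.summable_nat_rpow_inv.2 (lt_add_of_pos_right _ (by positivity)))
    (fun a => by positivity) n
  have h22 := h2.mul_of_nonneg h2 (fun a => by positivity) (fun a => by positivity)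
  have hall := h22.mul_of_nonneg hrow (fun a => by positivity)
    (fun b => Finset.prod_nonneg fun j _ => by positivity)
  refine Summable.of_nonneg_of_le (fun x => mul_nonneg (by positivity) (rowProd_nonneg _ _))
    (fun x => ?_) (hall.comp_injective Subtype.val_injective)
  obtain ⟨⟨⟨a, c⟩, b⟩, ha, -, hb, hab⟩ := x
  simp only [Function.comp_apply]
  rw [mul_inv]
  exact mul_le_mul_of_nonneg_left
    (rowProd_le_prod_rpow hl hk hlast hb fun j => ha.trans_le (hab j)) (by positivity)

/-- Data `((a, d, m), b)` with `a, d, m ≥ 1` and `a ≤ b₂ ≤ ⋯ ≤ b_r`. The entries of each tableau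
occurring in the shuffle product are partial sums of a permutation of `(a, d, m)`. -/
abbrev HookGaps (n : ℕ) : Type :=
  {x : (ℕ × ℕ × ℕ) × (Fin n → ℕ) //
    0 < x.1.1 ∧ 0 < x.1.2.1 ∧ 0 < x.1.2.2 ∧ Monotone x.2 ∧ ∀ j, x.1.1 ≤ x.2 j}

/-- Exchange of the two gaps `d` and `m`. -/
def HookGaps.swap (n : ℕ) : HookGaps n ≃ HookGaps n where
  toFun x := ⟨((x.1.1.1, x.1.1.2.2, x.1.1.2.1), x.1.2),
    x.2.1, x.2.2.2.1, x.2.2.1, x.2.2.2.2⟩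
  invFun x := ⟨((x.1.1.1, x.1.1.2.2, x.1.1.2.1), x.1.2),
    x.2.1, x.2.2.2.1, x.2.2.1, x.2.2.2.2⟩
  left_inv _ := rfl
  right_inv _ := rfl

/-- Gap data as the column `a < a + d < a + d + m` of a hook `(r,1,1)`. -/
def HookGaps.columnEquiv (n : ℕ) : HookGaps n ≃ {x : (ℕ × ℕ × ℕ) × (Fin n → ℕ) //
    0 < x.1.1 ∧ x.1.1 < x.1.2.1 ∧ x.1.2.1 < x.1.2.2 ∧ Monotone x.2 ∧ ∀ j, x.1.1 ≤ x.2 j} where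
  toFun x := ⟨((x.1.1.1, x.1.1.1 + x.1.1.2.1, x.1.1.1 + x.1.1.2.1 + x.1.1.2.2), x.1.2),
    x.2.1, Nat.lt_add_of_pos_right x.2.2.1, Nat.lt_add_of_pos_right x.2.2.2.1, x.2.2.2.2⟩
  invFun x := ⟨((x.1.1.1, x.1.1.2.1 - x.1.1.1, x.1.1.2.2 - x.1.1.2.1), x.1.2),
    x.2.1, Nat.sub_pos_of_lt x.2.2.1, Nat.sub_pos_of_lt x.2.2.2.1, x.2.2.2.2⟩
  left_inv := by
    rintro ⟨⟨⟨a, d, m⟩, b⟩, h⟩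
    simp
  right_inv := by
    rintro ⟨⟨⟨a, d, m⟩, b⟩, h₁, h₂, h₃, h⟩
    simp only [Subtype.mk.injEq, Prod.mk.injEq, and_true, true_and]
    dsimp only at h₁ h₂ h₃
    omega

/-- Gap data as the shift `m` together with the tableau entries `a < a + d`. -/
def HookGaps.shiftEquiv (n : ℕ) : HookGaps n ≃ {x : (ℕ × ℕ × ℕ) × (Fin n → ℕ) //
    0 < x.1.1 ∧ 0 < x.1.2.1 ∧ x.1.2.1 < x.1.2.2 ∧ Monotone x.2 ∧ ∀ j, x.1.2.1 ≤ x.2 j} where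
  toFun x := ⟨((x.1.1.2.2, x.1.1.1, x.1.1.1 + x.1.1.2.1), x.1.2),
    x.2.2.2.1, x.2.1, Nat.lt_add_of_pos_right x.2.2.1, x.2.2.2.2⟩
  invFun x := ⟨((x.1.1.2.1, x.1.1.2.2 - x.1.1.2.1, x.1.1.1), x.1.2),
    x.2.2.1, Nat.sub_pos_of_lt x.2.2.2.1, x.2.1, x.2.2.2.2⟩
  left_inv := by
    rintro ⟨⟨⟨a, d, m⟩, b⟩, h⟩
    simp
  right_inv := by
    rintro ⟨⟨⟨m, a, c⟩, b⟩, h₁, h₂, h₃, h⟩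
    simp only [Subtype.mk.injEq, Prod.mk.injEq, and_true, true_and]
    dsimp only at h₁ h₂ h₃
    omega

/-- Gap data as a tableau `(a, a + d, b)` of hook shape `(r,1)` together with a positive integer
`m`. -/
def HookGaps.prodEquiv (n : ℕ) : HookGaps n ≃ {x : (ℕ × ℕ) × (Fin n → ℕ) //
    0 < x.1.1 ∧ x.1.1 < x.1.2 ∧ Monotone x.2 ∧ ∀ j, x.1.1 ≤ x.2 j} × {m : ℕ // 0 < m} where
  toFun x := (⟨((x.1.1.1, x.1.1.1 + x.1.1.2.1), x.1.2),
    x.2.1, Nat.lt_add_of_pos_right x.2.2.1, x.2.2.2.2⟩, ⟨x.1.1.2.2, x.2.2.2.1⟩)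
  invFun x := ⟨((x.1.1.1.1, x.1.1.1.2 - x.1.1.1.1, x.2.1), x.1.1.2),
    x.1.2.1, Nat.sub_pos_of_lt x.1.2.2.1, x.2.2, x.1.2.2.2⟩
  left_inv := by
    rintro ⟨⟨⟨a, d, m⟩, b⟩, h⟩
    simp
  right_inv := by
    rintro ⟨⟨⟨⟨a, c⟩, b⟩, h₁, h₂, h⟩, ⟨m, hm⟩⟩
    simp only [Subtype.mk.injEq, Prod.mk.injEq, and_true, true_and]
    dsimp only at h₁ h₂
    omega

/-- Summand of `hookR11 k u v w` in terms of gaps. -/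
noncomputable def columnTerm {n : ℕ} (k : Fin n → ℕ) (u v w : ℕ) (x : HookGaps n) : ℝ :=
  ((x.1.1.1 : ℝ) ^ u * ((x.1.1.1 : ℝ) + x.1.1.2.1) ^ v
    * ((x.1.1.1 : ℝ) + x.1.1.2.1 + x.1.1.2.2) ^ w)⁻¹ * rowProd k x.1.2

/-- Summand of `efR1 k t u v` in terms of gaps. -/
noncomputable def shiftTerm {n : ℕ} (k : Fin n → ℕ) (t u v : ℕ) (x : HookGaps n) : ℝ :=
  ((x.1.1.2.2 : ℝ) ^ t * ((x.1.1.2.2 : ℝ) + x.1.1.1) ^ u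
    * ((x.1.1.2.2 : ℝ) + (x.1.1.1 + x.1.1.2.1)) ^ v)⁻¹ * rowProd k x.1.2

/-- Summand of the product `hookR1 k 2 2 * ζ(2)` in terms of gaps. -/
noncomputable def prodTerm {n : ℕ} (k : Fin n → ℕ) (x : HookGaps n) : ℝ :=
  ((x.1.1.1 : ℝ) ^ 2 * ((x.1.1.1 : ℝ) + x.1.1.2.1) ^ 2 * (x.1.1.2.2 : ℝ) ^ 2)⁻¹ * rowProd k x.1.2

theorem columnTerm_nonneg {n : ℕ} (k : Fin n → ℕ) (u v w : ℕ) (x : HookGaps n) :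
    0 ≤ columnTerm k u v w x :=
  mul_nonneg (by positivity) (rowProd_nonneg _ _)

theorem shiftTerm_nonneg {n : ℕ} (k : Fin n → ℕ) (t u v : ℕ) (x : HookGaps n) :
    0 ≤ shiftTerm k t u v x :=
  mul_nonneg (by positivity) (rowProd_nonneg _ _)

theorem hookR11_eq_tsum {n : ℕ} (k : Fin n → ℕ) (u v w : ℕ) :
    hookR11 k u v w = ∑' x, columnTerm k u v w x := by
  rw [hookR11, ← (HookGaps.columnEquiv n).tsum_eq]
  simp [HookGaps.columnEquiv, columnTerm]

theorem hookR11_eq_tsum_swap {n : ℕ} (k : Fin n → ℕ) (u v w : ℕ) :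
    hookR11 k u v w = ∑' x, columnTerm k u v w (HookGaps.swap n x) := by
  rw [hookR11_eq_tsum, ← (HookGaps.swap n).tsum_eq]

theorem efR1_eq_tsum {n : ℕ} (k : Fin n → ℕ) (t u v : ℕ) :
    efR1 k t u v = ∑' x, shiftTerm k t u v x := by
  rw [efR1, ← (HookGaps.shiftEquiv n).tsum_eq]
  simp [HookGaps.shiftEquiv, shiftTerm]

theorem hasSum_prodTerm {n : ℕ} {l : Fin n} (hl : ∀ j, j ≤ l) {k : Fin n → ℕ}
    (hk : ∀ j, 1 ≤ k j) (hlast : 2 ≤ k l) :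
    HasSum (prodTerm k)
      (hookR1 k 2 2 * (∑' m : {m : ℕ // 0 < m}, (((m : ℕ) : ℝ) ^ 2)⁻¹)) := by
  have hs := summable_hookR1_two_two hl hk hlast
  have hz : Summable fun m : {m : ℕ // 0 < m} => (((m : ℕ) : ℝ) ^ 2)⁻¹ :=
    (Real.summable_nat_pow_inv.2 one_lt_two).comp_injective Subtype.val_injective
  have hprod := hs.hasSum.mul hz.hasSum (hs.mul_of_nonneg hz
    (fun x => mul_nonneg (by positivity) (rowProd_nonneg _ _)) fun m => by positivity)
  rw [← (HookGaps.prodEquiv n).hasSum_iff] at hprod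
  convert! hprod using 1
  funext x
  simp only [prodTerm, HookGaps.prodEquiv, Equiv.coe_fn_mk, Function.comp_apply, mul_inv,
    Nat.cast_add]
  ring

/-- Iterated partial fraction decomposition of `1 / (a² (a+d)² m²)`. -/
theorem prodTerm_eq {n : ℕ} (k : Fin n → ℕ) (x : HookGaps n) :
    prodTerm k x = shiftTerm k 2 2 2 x + 2 * shiftTerm k 1 3 2 x + 2 * shiftTerm k 1 2 3 x
      + (columnTerm k 2 2 2 x + columnTerm k 2 2 2 (HookGaps.swap n x))
      + 2 * columnTerm k 1 3 2 (HookGaps.swap n x) + 2 * columnTerm k 1 2 3 (HookGaps.swap n x)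
      + (2 * columnTerm k 2 1 3 x + 2 * columnTerm k 2 1 3 (HookGaps.swap n x)) := by
  obtain ⟨⟨⟨a, d, m⟩, b⟩, ha, hd, hm, h⟩ := x
  have ha' : (0 : ℝ) < a := by exact_mod_cast ha
  have hd' : (0 : ℝ) < d := by exact_mod_cast hd
  have hm' : (0 : ℝ) < m := by exact_mod_cast hm
  simp only [prodTerm, shiftTerm, columnTerm, HookGaps.swap, Equiv.coe_fn_mk]
  generalize rowProd k b = R
  generalize (a : ℝ) = a at *
  generalize (d : ℝ) = d at *
  generalize (m : ℝ) = m at *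
  rw [show m + (a + d) = a + d + m by ring, show a + m + d = a + d + m by ring,
    show m + a = a + m by ring]
  have h1 : a + m ≠ 0 := by positivity
  have h2 : a + d ≠ 0 := by positivity
  have h3 : a + d + m ≠ 0 := by positivity
  field_simp
  ring

/-- Example: shuffle product `ζ_{(r,1)}((2,k₂,…,k_r);2)·ζ(2) = E₁ + 2E₂ + 2E₃ + 2A + 2B + 2C + 4D`. -/
theorem shuffle_hook_r1_zeta2 (n : ℕ) (hn : 1 ≤ n) (k : Fin n → ℕ)
    (hk : ∀ j, 1 ≤ k j) (hlast : 2 ≤ k ⟨n - 1, by omega⟩) :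
    hookR1 k 2 2 * (∑' m : {m : ℕ // 0 < m}, (((m : ℕ) : ℝ) ^ 2)⁻¹) =
      efR1 k 2 2 2 + 2 * efR1 k 1 3 2 + 2 * efR1 k 1 2 3
        + 2 * hookR11 k 2 2 2 + 2 * hookR11 k 1 3 2 + 2 * hookR11 k 1 2 3
        + 4 * hookR11 k 2 1 3 := by
  have hC := fun u v w (x : HookGaps n) => columnTerm_nonneg k u v w x
  have hE := fun t u v (x : HookGaps n) => shiftTerm_nonneg k t u v x
  have hP := hasSum_prodTerm (fun j => Fin.le_def.2 (Nat.le_sub_one_of_lt j.2)) hk hlast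
  have hsummable : ∀ f : HookGaps n → ℝ, (∀ x, 0 ≤ f x) → (∀ x, f x ≤ prodTerm k x) →
      Summable f := fun f h0 h => Summable.of_nonneg_of_le h0 h hP.summable
  have hbound : ∀ x, shiftTerm k 2 2 2 x ≤ prodTerm k x ∧ shiftTerm k 1 3 2 x ≤ prodTerm k x ∧
      shiftTerm k 1 2 3 x ≤ prodTerm k x ∧ columnTerm k 2 2 2 x ≤ prodTerm k x ∧
      columnTerm k 2 1 3 x ≤ prodTerm k x ∧
      columnTerm k 1 3 2 (HookGaps.swap n x) ≤ prodTerm k x ∧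
      columnTerm k 1 2 3 (HookGaps.swap n x) ≤ prodTerm k x := by
    intro x
    have h := prodTerm_eq k x
    have := hE 2 2 2 x
    have := hE 1 3 2 x
    have := hE 1 2 3 x
    have := hC 2 2 2 x
    have := hC 2 1 3 x
    have := hC 2 2 2 (HookGaps.swap n x)
    have := hC 1 3 2 (HookGaps.swap n x)
    have := hC 1 2 3 (HookGaps.swap n x)
    have := hC 2 1 3 (HookGaps.swap n x)
    refine ⟨?_, ?_, ?_, ?_, ?_, ?_, ?_⟩ <;> linarith
  have sE222 := (hsummable _ (hE 2 2 2) fun x => (hbound x).1).hasSum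
  have sE132 := (hsummable _ (hE 1 3 2) fun x => (hbound x).2.1).hasSum
  have sE123 := (hsummable _ (hE 1 2 3) fun x => (hbound x).2.2.1).hasSum
  have s222 := hsummable _ (hC 2 2 2) fun x => (hbound x).2.2.2.1
  have s213 := hsummable _ (hC 2 1 3) fun x => (hbound x).2.2.2.2.1
  have s132 := (hsummable _ (fun x => hC 1 3 2 (HookGaps.swap n x))
    fun x => (hbound x).2.2.2.2.2.1).hasSum
  have s123 := (hsummable _ (fun x => hC 1 2 3 (HookGaps.swap n x))
    fun x => (hbound x).2.2.2.2.2.2).hasSum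
  have s222' := ((HookGaps.swap n).summable_iff.2 s222).hasSum
  have s213' := ((HookGaps.swap n).summable_iff.2 s213).hasSum
  simp only [Function.comp_def] at s222' s213'
  replace s222 := s222.hasSum
  replace s213 := s213.hasSum
  rw [← efR1_eq_tsum] at sE222 sE132 sE123
  rw [← hookR11_eq_tsum] at s222 s213
  rw [← hookR11_eq_tsum_swap] at s132 s123 s222' s213'
  have htotal := (((((sE222.add (sE132.mul_left 2)).add (sE123.mul_left 2)).add
    (s222.add s222')).add (s132.mul_left 2)).add (s123.mul_left 2)).add
    ((s213.mul_left 2).add (s213'.mul_left 2))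
  rw [← funext (prodTerm_eq k)] at htotal
  rw [hP.unique htotal]
  ring
end

section
/- Telescoping decomposition: Σ over m ≥ 1 and semistandard hook fillings a ≤ b, a < c of 1/(m(m+a)(m+c)² b²) [i.e., ζ_{(2,1),1}((1,2;2),(1))] equals B − 2C − D − E, where B = Σ_{m ≤ c, a < c, a ≤ b} 1/(m a c² b²)·[skew pattern: m in a detached box below-left with m ≤ c], precisely B = Σ over positive integers m, a, b, c with a ≤ b, a < c, m ≤ c of 1/(m a² c² b²) with exponent pattern (3;2) — specifically the identity ζ_{(2,1),1}((3,2;2),(1)) = ζ_{skew}((3,2;1,2)) − 2ζ_{(2,1,1)}(3,2;1;2) − ζ_{(2,1,1)}(2,2;2;2) − ζ_{(2,1,1)}(1,2;3;2) holds, where ζ_{(2,1),1}((3,2;2),(1)) = Σ_{m ≥ 1, a ≤ b, a < c} 1/(m (m+a)³ b² (m+c)²), ζ_{skew}((3,2;1,2)) = Σ_{m ≤ c, a < c, a ≤ b} 1/(m a³ b² c²) over the skew shape fillings with m ≤ c, and ζ_{(2,1,1)}(s₁;s₂;s₃ with row exponent 2) = Σ_{m₁ < m₂ < m₃, m₁ ≤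 b} 1/(m₁^{s₁} b² m₂^{s₂} m₃^{s₃}). -/
/-- `ζ_{(2,1,1)}(s₁,2;s₂;s₃) = Σ_{m₁<m₂<m₃, m₁≤b} 1/(m₁^{s₁} b² m₂^{s₂} m₃^{s₃})`. -/
noncomputable def hook211 (s₁ s₂ s₃ : ℕ) : ℝ :=
  ∑' q : {q : ℕ × ℕ × ℕ × ℕ //
      0 < q.1 ∧ q.1 < q.2.1 ∧ q.2.1 < q.2.2.1 ∧ q.1 ≤ q.2.2.2},
    ((q.1.1 : ℝ) ^ s₁ * (q.1.2.2.2 : ℝ) ^ 2 * (q.1.2.1 : ℝ) ^ s₂ * (q.1.2.2.1 : ℝ) ^ s₃)⁻¹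

open Filter Topology in
/-- A telescoping form of the `c`-th harmonic number. -/
theorem hasSum_harmonic_telescope (c : ℕ) :
    HasSum (fun i : ℕ => (c : ℝ) / (((i : ℝ) + 1) * ((i : ℝ) + 1 + c)))
      (∑ n ∈ Finset.range c, ((n : ℝ) + 1)⁻¹) := by
  have step (n : ℕ) : HasSum (fun i : ℕ => ((i : ℝ) + 1 + n)⁻¹ - ((i : ℝ) + 1 + (n + 1 : ℕ))⁻¹)
      ((n : ℝ) + 1)⁻¹ := by
    rw [hasSum_iff_tendsto_nat_of_nonneg]
    · have hsum (N : ℕ) :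
          ∑ i ∈ Finset.range N, (((i : ℝ) + 1 + n)⁻¹ - ((i : ℝ) + 1 + (n + 1 : ℕ))⁻¹)
            = ((n : ℝ) + 1)⁻¹ - ((N : ℝ) + (n + 1))⁻¹ := by
        induction N with
        | zero => simp
        | succ N ih =>
          rw [Finset.sum_range_succ, ih]
          push_cast
          ring
      simp_rw [hsum]
      have hlim : Tendsto (fun N : ℕ => ((N : ℝ) + (n + 1))⁻¹) atTop (𝓝 0) :=
        tendsto_inv_atTop_zero.comp (tendsto_atTop_add_const_right _ _ tendsto_natCast_atTop_atTop)
      simpa using hlim.const_sub ((n : ℝ) + 1)⁻¹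
    · intro i
      rw [sub_nonneg]
      push_cast
      gcongr
      linarith
  refine (hasSum_sum fun n (_ : n ∈ Finset.range c) => step n).congr_fun ?_
  intro i
  rw [Finset.sum_range_sub' (fun n : ℕ => ((i : ℝ) + 1 + n)⁻¹)]
  have : (i : ℝ) + 1 ≠ 0 := by positivity
  have : (i : ℝ) + 1 + c ≠ 0 := by positivity
  simp only [Nat.cast_zero, add_zero]
  field_simp
  ring

theorem tsum_eq_toReal_tsum_ofReal {β : Type*} {f : β → ℝ} (hf : ∀ x, 0 ≤ f x) :
    ∑' x, f x = (∑' x, ENNReal.ofReal (f x)).toReal := by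
  rw [ENNReal.tsum_toReal_eq fun _ => ENNReal.ofReal_ne_top]
  exact tsum_congr fun x => (ENNReal.toReal_ofReal (hf x)).symm

/-- Free parameters `((k, l, j), i)` for `a = k + 1`, `b = a + l`, `c = a + 1 + j`, `m = i + 1`. -/
def shiftedHookEquiv : (ℕ × ℕ × ℕ) × ℕ ≃ {q : ℕ × ℕ × ℕ × ℕ //
    0 < q.1 ∧ 0 < q.2.1 ∧ q.2.1 ≤ q.2.2.1 ∧ q.2.1 < q.2.2.2} where
  toFun p := ⟨(p.2 + 1, p.1.1 + 1, p.1.1 + 1 + p.1.2.1, p.1.1 + 1 + 1 + p.1.2.2), by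
    dsimp only; omega⟩
  invFun q := ((q.1.2.1 - 1, q.1.2.2.1 - q.1.2.1, q.1.2.2.2 - q.1.2.1 - 1), q.1.1 - 1)
  left_inv := by
    rintro ⟨⟨k, l, j⟩, i⟩
    simp only [Prod.mk.injEq]
    omega
  right_inv := by
    rintro ⟨⟨m, a, b, c⟩, h⟩
    dsimp only at h
    simp only [Subtype.mk.injEq, Prod.mk.injEq]
    omega

/-- Parametrization of hook fillings by `m₁ = a`, `m₂ = m + a`, `m₃ = m + c`. -/
def hookEquivAdd : (ℕ × ℕ × ℕ) × ℕ ≃ {q : ℕ × ℕ × ℕ × ℕ //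
    0 < q.1 ∧ q.1 < q.2.1 ∧ q.2.1 < q.2.2.1 ∧ q.1 ≤ q.2.2.2} where
  toFun p := ⟨(p.1.1 + 1, p.1.1 + 1 + 1 + p.2, p.1.1 + 1 + 1 + p.2 + 1 + p.1.2.2,
    p.1.1 + 1 + p.1.2.1), by dsimp only; omega⟩
  invFun q := ((q.1.1 - 1, q.1.2.2.2 - q.1.1, q.1.2.2.1 - q.1.2.1 - 1), q.1.2.1 - q.1.1 - 1)
  left_inv := by
    rintro ⟨⟨k, l, j⟩, i⟩
    simp only [Prod.mk.injEq]
    omega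
  right_inv := by
    rintro ⟨⟨x, y, z, b⟩, h⟩
    dsimp only at h
    simp only [Subtype.mk.injEq, Prod.mk.injEq]
    omega

/-- Parametrization of hook fillings by `m₁ = a`, `m₂ = c`, `m₃ = m + c`. -/
def hookEquivLeg : (ℕ × ℕ × ℕ) × ℕ ≃ {q : ℕ × ℕ × ℕ × ℕ //
    0 < q.1 ∧ q.1 < q.2.1 ∧ q.2.1 < q.2.2.1 ∧ q.1 ≤ q.2.2.2} where
  toFun p := ⟨(p.1.1 + 1, p.1.1 + 1 + 1 + p.1.2.2, p.1.1 + 1 + 1 + p.1.2.2 + 1 + p.2,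
    p.1.1 + 1 + p.1.2.1), by dsimp only; omega⟩
  invFun q := ((q.1.1 - 1, q.1.2.2.2 - q.1.1, q.1.2.1 - q.1.1 - 1), q.1.2.2.1 - q.1.2.1 - 1)
  left_inv := by
    rintro ⟨⟨k, l, j⟩, i⟩
    simp only [Prod.mk.injEq]
    omega
  right_inv := by
    rintro ⟨⟨x, y, z, b⟩, h⟩
    dsimp only at h
    simp only [Subtype.mk.injEq, Prod.mk.injEq]
    omega

/-- Parametrization of skew fillings by the hook part and the detached box `m ≤ c`. -/
def skewEquiv : (Σ t : ℕ × ℕ × ℕ, Fin (t.1 + 1 + 1 + t.2.2)) ≃ {q : ℕ × ℕ × ℕ × ℕ //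
    0 < q.1 ∧ 0 < q.2.1 ∧ q.2.1 ≤ q.2.2.1 ∧ q.2.1 < q.2.2.2 ∧ q.1 ≤ q.2.2.2} where
  toFun p := ⟨(p.2 + 1, p.1.1 + 1, p.1.1 + 1 + p.1.2.1, p.1.1 + 1 + 1 + p.1.2.2), by
    have := p.2.2
    dsimp only; omega⟩
  invFun q := ⟨(q.1.2.1 - 1, q.1.2.2.1 - q.1.2.1, q.1.2.2.2 - q.1.2.1 - 1), ⟨q.1.1 - 1, by
    have := q.2
    dsimp only; omega⟩⟩
  left_inv := by
    rintro ⟨⟨k, l, j⟩, ⟨i, hi⟩⟩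
    have h1 : k + 1 - 1 = k := by omega
    have h2 : k + 1 + l - (k + 1) = l := by omega
    have h3 : k + 1 + 1 + j - (k + 1) - 1 = j := by omega
    have h4 : i + 1 - 1 = i := by omega
    simp only [Sigma.mk.injEq, h1, h2, h3, h4, true_and]
    congr!
  right_inv := by
    rintro ⟨⟨m, a, b, c⟩, h⟩
    dsimp only at h
    simp only [Subtype.mk.injEq, Prod.mk.injEq]
    omega

/-- The common refinement `1 / (m (m + c) a³ b² c)` of all the series involved. -/
noncomputable def mergedTerm (p : (ℕ × ℕ × ℕ) × ℕ) : ℝ :=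
  (((p.2 : ℝ) + 1) * ((p.2 : ℝ) + 1 + (p.1.1 + 1 + 1 + p.1.2.2)) * ((p.1.1 : ℝ) + 1) ^ 3
    * ((p.1.1 : ℝ) + 1 + p.1.2.1) ^ 2 * ((p.1.1 : ℝ) + 1 + 1 + p.1.2.2))⁻¹

theorem mergedTerm_nonneg (p : (ℕ × ℕ × ℕ) × ℕ) : 0 ≤ mergedTerm p := by
  unfold mergedTerm
  positivity

theorem inv_mul_mul_add_le {x y z : ℝ} (hx : 0 < x) (hy : 0 < y) (hyz : y ≤ z) :
    (x * (x + z) * z)⁻¹ ≤ (x ^ (3 / 2 : ℝ))⁻¹ * (y ^ (3 / 2 : ℝ))⁻¹ := by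
  have hpow {t : ℝ} (ht : 0 < t) : t ^ (3 / 2 : ℝ) = t * √t := by
    rw [Real.sqrt_eq_rpow, ← Real.rpow_one_add' ht.le (by norm_num)]
    norm_num
  rw [← mul_inv, hpow hx, hpow hy]
  have hsqrt : √x * √y ≤ x + z := by
    nlinarith [sq_nonneg (√x - √y), Real.sq_sqrt hx.le, Real.sq_sqrt hy.le]
  have hz : 0 < z := hy.trans_le hyz
  refine inv_anti₀ (by positivity) ?_
  calc x * √x * (y * √y) = x * (√x * √y) * y := by ring
    _ ≤ x * (x + z) * z := by gcongr

theorem summable_mergedTerm : Summable mergedTerm := by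
  have hu : Summable fun n : ℕ => (((n : ℝ) + 1) ^ (3 / 2 : ℝ))⁻¹ := by
    have := (summable_nat_add_iff 1).2
      (Real.summable_nat_rpow_inv.2 (show (1 : ℝ) < 3 / 2 by norm_num))
    simpa using this
  have hv (d : ℕ) (hd : 1 < d) : Summable fun n : ℕ => (((n : ℝ) + 1) ^ d)⁻¹ := by
    have := (summable_nat_add_iff 1).2 (Real.summable_nat_pow_inv.2 hd)
    simpa using this
  have hprod := ((hv 3 (by norm_num)).mul_of_nonneg ((hv 2 (by norm_num)).mul_of_nonneg hu
    (fun _ => by positivity) fun _ => by positivity)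
    (fun _ => by positivity) fun _ => by positivity).mul_of_nonneg hu
    (fun _ => by positivity) fun _ => by positivity
  refine hprod.of_nonneg_of_le mergedTerm_nonneg ?_
  rintro ⟨⟨k, l, j⟩, i⟩
  have h := inv_mul_mul_add_le (x := (i : ℝ) + 1) (y := (j : ℝ) + 1) (z := (k : ℝ) + 1 + 1 + j)
    (by positivity) (by positivity) (by linarith [(Nat.cast_nonneg k : (0 : ℝ) ≤ k)])
  have hb : (((k : ℝ) + 1 + l) ^ 2)⁻¹ ≤ (((l : ℝ) + 1) ^ 2)⁻¹ := by
    refine inv_anti₀ (by positivity) (pow_le_pow_left₀ (by positivity) ?_ 2)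
    linarith [(Nat.cast_nonneg k : (0 : ℝ) ≤ k)]
  calc mergedTerm ((k, l, j), i)
      = (((k : ℝ) + 1) ^ 3)⁻¹ * (((k : ℝ) + 1 + l) ^ 2)⁻¹
        * (((i : ℝ) + 1) * ((i : ℝ) + 1 + ((k : ℝ) + 1 + 1 + j)) * ((k : ℝ) + 1 + 1 + j))⁻¹ := by
        simp only [mergedTerm, mul_inv]
        ring
    _ ≤ (((k : ℝ) + 1) ^ 3)⁻¹ * (((l : ℝ) + 1) ^ 2)⁻¹
        * ((((i : ℝ) + 1) ^ (3 / 2 : ℝ))⁻¹ * (((j : ℝ) + 1) ^ (3 / 2 : ℝ))⁻¹) := by gcongr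
    _ = _ := by ring

theorem tsum_skew_eq_tsum_mergedTerm :
    (∑' q : {q : ℕ × ℕ × ℕ × ℕ //
          0 < q.1 ∧ 0 < q.2.1 ∧ q.2.1 ≤ q.2.2.1 ∧ q.2.1 < q.2.2.2 ∧ q.1 ≤ q.2.2.2},
        ((q.1.1 : ℝ) * (q.1.2.1 : ℝ) ^ 3 * (q.1.2.2.1 : ℝ) ^ 2 * (q.1.2.2.2 : ℝ) ^ 2)⁻¹)
      = ∑' p, mergedTerm p := by
  rw [← skewEquiv.tsum_eq, tsum_eq_toReal_tsum_ofReal (fun _ => by positivity),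
    tsum_eq_toReal_tsum_ofReal mergedTerm_nonneg, ENNReal.tsum_sigma',
    ENNReal.tsum_prod' (f := fun p => ENNReal.ofReal (mergedTerm p))]
  refine congrArg ENNReal.toReal (tsum_congr ?_)
  rintro ⟨k, l, j⟩
  have hsum := (hasSum_harmonic_telescope (k + 1 + 1 + j)).mul_left
    (((k : ℝ) + 1) ^ 3 * ((k : ℝ) + 1 + l) ^ 2 * ((k : ℝ) + 1 + 1 + j) ^ 2)⁻¹
  have hmerged : HasSum (fun i => mergedTerm ((k, l, j), i)) _ := hsum.congr_fun fun i => by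
    simp only [mergedTerm]
    push_cast
    field_simp
  rw [← ENNReal.ofReal_tsum_of_nonneg (fun i => mergedTerm_nonneg _) hmerged.summable,
    hmerged.tsum_eq, tsum_fintype, ← ENNReal.ofReal_sum_of_nonneg (fun _ _ => by positivity),
    Finset.mul_sum, ← Fin.sum_univ_eq_sum_range
      (fun n => (((k : ℝ) + 1) ^ 3 * ((k : ℝ) + 1 + l) ^ 2 * ((k : ℝ) + 1 + 1 + j) ^ 2)⁻¹
        * ((n : ℝ) + 1)⁻¹)]
  congr 1
  refine Finset.sum_congr rfl fun n _ => ?_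
  simp only [skewEquiv, Equiv.coe_fn_mk, ← mul_inv]
  push_cast
  ring

theorem partial_fraction_mergedTerm {a b c m : ℝ} (ha : 0 < a) (hb : 0 < b) (hc : 0 < c)
    (hm : 0 < m) :
    (m * (m + a) ^ 3 * b ^ 2 * (m + c) ^ 2)⁻¹ + (a ^ 3 * b ^ 2 * (m + a) ^ 1 * (m + c) ^ 2)⁻¹
      + (a ^ 3 * b ^ 2 * c ^ 1 * (m + c) ^ 2)⁻¹ + (a ^ 2 * b ^ 2 * (m + a) ^ 2 * (m + c) ^ 2)⁻¹
      + (a ^ 1 * b ^ 2 * (m + a) ^ 3 * (m + c) ^ 2)⁻¹ = (m * (m + c) * a ^ 3 * b ^ 2 * c)⁻¹ := by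
  field_simp
  ring

/-- Telescoping decomposition (Example 4.4, first identity):
`ζ_{(2,1),1}((3,2;2),(1)) = ζ_skew((3,2;1,2)) − 2ζ_{(2,1,1)}(3,2;1;2) − ζ_{(2,1,1)}(2,2;2;2)`
`− ζ_{(2,1,1)}(1,2;3;2)`, where
`ζ_{(2,1),1}((3,2;2),(1)) = Σ_{m ≥ 1, a ≤ b, a < c} 1/(m (m+a)³ b² (m+c)²)` and
`ζ_skew((3,2;1,2)) = Σ_{m ≤ c, a ≤ b, a < c} 1/(m a³ b² c²)`. -/
theorem telescoping_decomposition :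
    (∑' q : {q : ℕ × ℕ × ℕ × ℕ //
        0 < q.1 ∧ 0 < q.2.1 ∧ q.2.1 ≤ q.2.2.1 ∧ q.2.1 < q.2.2.2},
      ((q.1.1 : ℝ) * ((q.1.1 + q.1.2.1 : ℕ) : ℝ) ^ 3 * (q.1.2.2.1 : ℝ) ^ 2
          * ((q.1.1 + q.1.2.2.2 : ℕ) : ℝ) ^ 2)⁻¹) =
      (∑' q : {q : ℕ × ℕ × ℕ × ℕ //
          0 < q.1 ∧ 0 < q.2.1 ∧ q.2.1 ≤ q.2.2.1 ∧ q.2.1 < q.2.2.2 ∧ q.1 ≤ q.2.2.2},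
        ((q.1.1 : ℝ) * (q.1.2.1 : ℝ) ^ 3 * (q.1.2.2.1 : ℝ) ^ 2 * (q.1.2.2.2 : ℝ) ^ 2)⁻¹)
        - 2 * hook211 3 1 2 - hook211 2 2 2 - hook211 1 3 2 := by
  set L : (ℕ × ℕ × ℕ) × ℕ → ℝ := fun p => (((p.2 : ℝ) + 1) * ((p.2 : ℝ) + 1 + (p.1.1 + 1)) ^ 3
    * ((p.1.1 : ℝ) + 1 + p.1.2.1) ^ 2
    * ((p.2 : ℝ) + 1 + (p.1.1 + 1 + 1 + p.1.2.2)) ^ 2)⁻¹ with hL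
  set A : ℕ → ℕ → (ℕ × ℕ × ℕ) × ℕ → ℝ := fun s t p => (((p.1.1 : ℝ) + 1) ^ s
    * ((p.1.1 : ℝ) + 1 + p.1.2.1) ^ 2 * ((p.2 : ℝ) + 1 + (p.1.1 + 1)) ^ t
    * ((p.2 : ℝ) + 1 + (p.1.1 + 1 + 1 + p.1.2.2)) ^ 2)⁻¹ with hA
  set B : (ℕ × ℕ × ℕ) × ℕ → ℝ := fun p => (((p.1.1 : ℝ) + 1) ^ 3
    * ((p.1.1 : ℝ) + 1 + p.1.2.1) ^ 2 * ((p.1.1 : ℝ) + 1 + 1 + p.1.2.2) ^ 1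
    * ((p.2 : ℝ) + 1 + (p.1.1 + 1 + 1 + p.1.2.2)) ^ 2)⁻¹ with hB
  have hLn (p) : 0 ≤ L p := by positivity
  have hAn (s t p) : 0 ≤ A s t p := by positivity
  have hBn (p) : 0 ≤ B p := by positivity
  have hsplit (p) : L p + A 3 1 p + B p + A 2 2 p + A 1 3 p = mergedTerm p :=
    partial_fraction_mergedTerm (by positivity) (by positivity) (by positivity) (by positivity)
  have hsL : Summable L := summable_mergedTerm.of_nonneg_of_le hLn fun p => by
    linarith [hsplit p, hAn 3 1 p, hBn p, hAn 2 2 p, hAn 1 3 p]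
  have hsB : Summable B := summable_mergedTerm.of_nonneg_of_le hBn fun p => by
    linarith [hsplit p, hAn 3 1 p, hLn p, hAn 2 2 p, hAn 1 3 p]
  have hs31 : Summable (A 3 1) := summable_mergedTerm.of_nonneg_of_le (hAn 3 1) fun p => by
    linarith [hsplit p, hLn p, hBn p, hAn 2 2 p, hAn 1 3 p]
  have hs22 : Summable (A 2 2) := summable_mergedTerm.of_nonneg_of_le (hAn 2 2) fun p => by
    linarith [hsplit p, hLn p, hBn p, hAn 3 1 p, hAn 1 3 p]
  have hs13 : Summable (A 1 3) := summable_mergedTerm.of_nonneg_of_le (hAn 1 3) fun p => by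
    linarith [hsplit p, hLn p, hBn p, hAn 3 1 p, hAn 2 2 p]
  have hookA (s t) : hook211 s t 2 = ∑' p, A s t p := by
    rw [hook211, ← hookEquivAdd.tsum_eq]
    refine tsum_congr fun p => ?_
    simp only [hookEquivAdd, Equiv.coe_fn_mk, hA]
    push_cast
    congr 3 <;> ring
  have hookB : hook211 3 1 2 = ∑' p, B p := by
    rw [hook211, ← hookEquivLeg.tsum_eq]
    refine tsum_congr fun p => ?_
    simp only [hookEquivLeg, Equiv.coe_fn_mk, hB]
    push_cast
    congr 3
    ring
  have hmerged : ∑' p, mergedTerm p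
      = ∑' p, L p + ∑' p, A 3 1 p + ∑' p, B p + ∑' p, A 2 2 p + ∑' p, A 1 3 p := by
    rw [← hsL.tsum_add hs31, ← (hsL.add hs31).tsum_add hsB,
      ← ((hsL.add hs31).add hsB).tsum_add hs22, ← (((hsL.add hs31).add hsB).add hs22).tsum_add hs13]
    exact tsum_congr fun p => (hsplit p).symm
  rw [tsum_skew_eq_tsum_mergedTerm, hmerged, ← hookA 3 1, ← hookB, ← hookA 2 2, ← hookA 1 3,
    ← shiftedHookEquiv.tsum_eq, tsum_congr (g := L) fun p => by
      simp only [shiftedHookEquiv, Equiv.coe_fn_mk, hL]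
      push_cast
      rfl]
  ring
end

section
/- For k₁ ≥ 1 and k₂, ℓ ≥ 2, the product of a double zeta value and a Riemann zeta value satisfies (Guo–Xie): ζ(k₁,k₂)·ζ(ℓ) = Σ_{i₁ ≥ 1, i₂ ≥ 2, i₁+i₂ = k₂+ℓ} C(i₂-1, ℓ-1)·ζ(k₁, i₁, i₂) + Σ_{i₁,i₂ ≥ 1, i₃ ≥ 2, i₁+i₂+i₃ = k₁+k₂+ℓ} C(i₃-1, k₂-1)·[C(i₂-1, k₁-i₁) + C(i₂-1, k₁-1)]·ζ(i₁, i₂, i₃), where ζ(a,b) = Σ_{1 ≤ n < m} n^{-a} m^{-b} and ζ(a,b,c) = Σ_{1 ≤ n < m < p} n^{-a} m^{-b} p^{-c}. -/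
/-- Riemann zeta value `ζ(s) = Σ_{n ≥ 1} n⁻ˢ`. -/
noncomputable def zetaVal (s : ℕ) : ℝ :=
  ∑' n : {n : ℕ // 0 < n}, (((n : ℕ) : ℝ) ^ s)⁻¹

/-- Double zeta value `ζ(a,b) = Σ_{0 < n < m} n⁻ᵃ m⁻ᵇ`. -/
noncomputable def mzv2 (a b : ℕ) : ℝ :=
  ∑' p : {p : ℕ × ℕ // 0 < p.1 ∧ p.1 < p.2},
    ((p.1.1 : ℝ) ^ a * (p.1.2 : ℝ) ^ b)⁻¹

/-- Triple zeta value `ζ(a,b,c) = Σ_{0 < n < m < p} n⁻ᵃ m⁻ᵇ p⁻ᶜ`. -/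
noncomputable def mzv3 (a b c : ℕ) : ℝ :=
  ∑' p : {p : ℕ × ℕ × ℕ // 0 < p.1 ∧ p.1 < p.2.1 ∧ p.2.1 < p.2.2},
    ((p.1.1 : ℝ) ^ a * (p.1.2.1 : ℝ) ^ b * (p.1.2.2 : ℝ) ^ c)⁻¹

open scoped ENNReal

section PartialFractions

open Finset

/-- The half of the partial fraction expansion of `(x ^ (K + 1) * y ^ (L + 1))⁻¹` that carries
the powers of `X = x⁻¹`, with `S = (x + y)⁻¹`. -/
def partialFractionHalf (X S : ℝ) (K L : ℕ) : ℝ :=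
  ∑ p ∈ antidiagonal (K + L), (p.2.choose L : ℝ) * (X ^ (p.1 + 1) * S ^ (p.2 + 1))

lemma partialFractionHalf_zero_zero (X S : ℝ) : partialFractionHalf X S 0 0 = X * S := by
  simp [partialFractionHalf]

lemma partialFractionHalf_zero_succ (X S : ℝ) (L : ℕ) :
    partialFractionHalf X S 0 (L + 1) = S * partialFractionHalf X S 0 L := by
  simp only [partialFractionHalf, ← add_assoc, Nat.sum_antidiagonal_succ', mul_sum]
  simp only [Nat.choose_zero_succ, Nat.cast_zero, zero_mul, zero_add]
  refine sum_congr rfl fun p hp => ?_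
  have h : p.2 < L + 1 := by have := mem_antidiagonal.1 hp; omega
  rw [Nat.choose_succ_succ, Nat.choose_eq_zero_of_lt h]
  push_cast
  ring

lemma partialFractionHalf_succ_zero (X S : ℝ) (K : ℕ) :
    partialFractionHalf X S (K + 1) 0 = S * (X ^ (K + 2) + partialFractionHalf X S K 0) := by
  simp only [partialFractionHalf, add_zero, Nat.sum_antidiagonal_succ', mul_add, mul_sum]
  simp only [Nat.choose_zero_right, Nat.cast_one, one_mul, zero_add]
  congr 1
  · ring
  · exact sum_congr rfl fun p _ => by ring

lemma partialFractionHalf_succ_succ (X S : ℝ) (K L : ℕ) :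
    partialFractionHalf X S (K + 1) (L + 1) =
      S * (partialFractionHalf X S K (L + 1) + partialFractionHalf X S (K + 1) L) := by
  have e₁ : K + 1 + (L + 1) = K + L + 1 + 1 := by ring
  have e₂ : K + (L + 1) = K + L + 1 := by ring
  have e₃ : K + 1 + L = K + L + 1 := by ring
  simp only [partialFractionHalf, e₁, e₂, e₃]
  rw [Nat.sum_antidiagonal_succ', ← sum_add_distrib, mul_sum]
  simp only [Nat.choose_zero_succ, Nat.cast_zero, zero_mul, zero_add]
  refine sum_congr rfl fun p _ => ?_
  rw [Nat.choose_succ_succ]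
  push_cast
  ring

lemma pow_mul_pow_eq_partialFractionHalf {X Y S : ℝ} (h : X * Y = S * (X + Y)) (K L : ℕ) :
    X ^ (K + 1) * Y ^ (L + 1) = partialFractionHalf X S K L + partialFractionHalf Y S L K := by
  induction K generalizing L with
  | zero =>
    induction L with
    | zero => rw [partialFractionHalf_zero_zero, partialFractionHalf_zero_zero]; linear_combination h
    | succ L ih =>
      rw [partialFractionHalf_zero_succ, partialFractionHalf_succ_zero]
      linear_combination S * ih + Y ^ (L + 1) * h
  | succ K ihK =>
    induction L with
    | zero =>
      rw [partialFractionHalf_zero_succ, partialFractionHalf_succ_zero]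
      linear_combination S * ihK 0 + X ^ (K + 1) * h
    | succ L ihL =>
      rw [partialFractionHalf_succ_succ, partialFractionHalf_succ_succ]
      linear_combination S * ihL + S * ihK (L + 1) + X ^ (K + 1) * Y ^ (L + 1) * h

end PartialFractions

/-- Double zeta value as an extended nonnegative real, summed over the gaps `n, m - n`. -/
noncomputable def emzv2 (a b : ℕ) : ℝ≥0∞ :=
  ∑' p : ℕ+ × ℕ+, ENNReal.ofReal ((p.1 : ℝ)⁻¹ ^ a * ((p.1 : ℝ) + p.2)⁻¹ ^ b)

/-- Triple zeta value as an extended nonnegative real, summed over the gaps `n, m - n, p - m`. -/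
noncomputable def emzv3 (a b c : ℕ) : ℝ≥0∞ :=
  ∑' p : ℕ+ × ℕ+ × ℕ+, ENNReal.ofReal
    ((p.1 : ℝ)⁻¹ ^ a * ((p.1 : ℝ) + p.2.1)⁻¹ ^ b * ((p.1 : ℝ) + p.2.1 + p.2.2)⁻¹ ^ c)

/-- Riemann zeta value as an extended nonnegative real. -/
noncomputable def ezeta (s : ℕ) : ℝ≥0∞ :=
  ∑' n : ℕ+, ENNReal.ofReal ((n : ℝ)⁻¹ ^ s)

lemma zetaVal_eq_toReal (s : ℕ) : zetaVal s = (ezeta s).toReal := by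
  rw [ezeta, ENNReal.tsum_toReal_eq fun _ => ENNReal.ofReal_ne_top, zetaVal]
  refine tsum_congr fun n => ?_
  rw [ENNReal.toReal_ofReal (by positivity), inv_pow]
  rfl

/-- Strictly increasing pairs of positive integers are determined by their gaps. -/
def gapsEquivPair : ℕ+ × ℕ+ ≃ {p : ℕ × ℕ // 0 < p.1 ∧ p.1 < p.2} where
  toFun p := ⟨(p.1, p.1 + p.2), p.1.pos, Nat.lt_add_of_pos_right p.2.pos⟩
  invFun p := (⟨p.1.1, p.2.1⟩, ⟨p.1.2 - p.1.1, Nat.sub_pos_of_lt p.2.2⟩)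
  left_inv p := by
    refine Prod.ext (PNat.eq ?_) (PNat.eq ?_) <;> simp
  right_inv p := by
    obtain ⟨⟨a, b⟩, ha, hb⟩ := p
    simp only [Subtype.mk.injEq, Prod.mk.injEq, PNat.mk_coe, true_and]
    exact Nat.add_sub_of_le hb.le

/-- Strictly increasing triples of positive integers are determined by their gaps. -/
def gapsEquivTriple :
    ℕ+ × ℕ+ × ℕ+ ≃ {p : ℕ × ℕ × ℕ // 0 < p.1 ∧ p.1 < p.2.1 ∧ p.2.1 < p.2.2} where
  toFun p := ⟨(p.1, p.1 + p.2.1, p.1 + p.2.1 + p.2.2), p.1.pos,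
    Nat.lt_add_of_pos_right p.2.1.pos, Nat.lt_add_of_pos_right p.2.2.pos⟩
  invFun p := (⟨p.1.1, p.2.1⟩, ⟨p.1.2.1 - p.1.1, Nat.sub_pos_of_lt p.2.2.1⟩,
    ⟨p.1.2.2 - p.1.2.1, Nat.sub_pos_of_lt p.2.2.2⟩)
  left_inv p := by
    refine Prod.ext (PNat.eq ?_) (Prod.ext (PNat.eq ?_) (PNat.eq ?_)) <;> simp
  right_inv p := by
    obtain ⟨⟨a, b, c⟩, ha, hb, hc⟩ := p
    simp only at ha hb hc
    simp only [Subtype.mk.injEq, Prod.mk.injEq, PNat.mk_coe, true_and]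
    omega

lemma mzv2_eq_toReal (a b : ℕ) : mzv2 a b = (emzv2 a b).toReal := by
  rw [emzv2, ENNReal.tsum_toReal_eq fun _ => ENNReal.ofReal_ne_top, mzv2, ← gapsEquivPair.tsum_eq]
  refine tsum_congr fun p => ?_
  rw [ENNReal.toReal_ofReal (by positivity)]
  simp [gapsEquivPair, mul_comm]

lemma mzv3_eq_toReal (a b c : ℕ) : mzv3 a b c = (emzv3 a b c).toReal := by
  rw [emzv3, ENNReal.tsum_toReal_eq fun _ => ENNReal.ofReal_ne_top, mzv3, ← gapsEquivTriple.tsum_eq]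
  refine tsum_congr fun p => ?_
  rw [ENNReal.toReal_ofReal (by positivity)]
  simp [gapsEquivTriple, mul_comm]

lemma summable_pnat_rpow_inv {s : ℝ} (hs : 1 < s) : Summable fun n : ℕ+ => ((n : ℝ) ^ s)⁻¹ :=
  (Real.summable_nat_rpow_inv.2 hs).comp_injective PNat.coe_injective

lemma ezeta_ne_top {s : ℕ} (hs : 2 ≤ s) : ezeta s ≠ ∞ := by
  have h : Summable fun n : ℕ+ => (n : ℝ)⁻¹ ^ s := by
    simp only [inv_pow]
    exact (Real.summable_nat_pow_inv.2 (by omega : 1 < s)).comp_injective PNat.coe_injective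
  exact h.tsum_ofReal_ne_top

lemma emzv2_ne_top {a b : ℕ} (ha : 1 ≤ a) (hb : 2 ≤ b) : emzv2 a b ≠ ∞ := by
  have h := summable_pnat_rpow_inv (s := 3 / 2) (by norm_num)
  refine Summable.tsum_ofReal_ne_top (Summable.of_nonneg_of_le (fun p => by positivity)
    (fun p => ?_) (h.mul_of_nonneg h (fun _ => by positivity) fun _ => by positivity))
  have hx : (1 : ℝ) ≤ p.1 := by exact_mod_cast one_le
  have hy : (1 : ℝ) ≤ p.2 := by exact_mod_cast one_le
  generalize (p.1 : ℝ) = x at *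
  generalize (p.2 : ℝ) = y at *
  have hx0 : 0 < x := by linarith
  have hy0 : 0 < y := by linarith
  have hle : x ^ (3 / 2 : ℝ) * y ^ (3 / 2 : ℝ) ≤ x ^ a * (x + y) ^ b := by
    calc x ^ (3 / 2 : ℝ) * y ^ (3 / 2 : ℝ)
        = x * (x ^ (1 / 2 : ℝ) * y ^ (3 / 2 : ℝ)) := by
          rw [← mul_assoc, ← Real.rpow_one_add' hx0.le (by norm_num)]; norm_num
      _ ≤ x * ((x + y) ^ (1 / 2 : ℝ) * (x + y) ^ (3 / 2 : ℝ)) := by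
          gcongr <;> linarith
      _ = x ^ 1 * (x + y) ^ 2 := by
          rw [← Real.rpow_add (by positivity), pow_one, ← Real.rpow_natCast]; norm_num
      _ ≤ x ^ a * (x + y) ^ b := by
          gcongr
          linarith
  rw [← mul_inv, inv_pow, inv_pow, ← mul_inv]
  exact inv_anti₀ (by positivity) hle

lemma inv_mul_inv_eq_inv_add {x y : ℝ} (hx : 0 < x) (hy : 0 < y) :
    x⁻¹ * y⁻¹ = (x + y)⁻¹ * (x⁻¹ + y⁻¹) := by
  field_simp
  ring

open Finset in
lemma mzv_summand_expansion {n a q : ℝ} (hn : 0 < n) (ha : 0 < a) (hq : 0 < q) (M K L : ℕ) :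
    n⁻¹ ^ (M + 1) * (n + a)⁻¹ ^ (K + 1) * q⁻¹ ^ (L + 1) =
      ∑ p ∈ antidiagonal (K + L), (p.2.choose L : ℝ) *
          (n⁻¹ ^ (M + 1) * (n + a)⁻¹ ^ (p.1 + 1) * (n + a + q)⁻¹ ^ (p.2 + 1)) +
        ∑ p ∈ antidiagonal (K + L), ∑ w ∈ antidiagonal (M + p.1),
          ((p.2.choose K * w.2.choose p.1 : ℝ) *
              (n⁻¹ ^ (w.1 + 1) * (n + q)⁻¹ ^ (w.2 + 1) * (n + q + a)⁻¹ ^ (p.2 + 1)) +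
            (p.2.choose K * w.2.choose M : ℝ) *
              (q⁻¹ ^ (w.1 + 1) * (q + n)⁻¹ ^ (w.2 + 1) * (q + n + a)⁻¹ ^ (p.2 + 1))) := by
  have h₁ := pow_mul_pow_eq_partialFractionHalf (inv_mul_inv_eq_inv_add (add_pos hn ha) hq) K L
  have h₂ := fun p => pow_mul_pow_eq_partialFractionHalf (inv_mul_inv_eq_inv_add hn hq) M p
  rw [mul_assoc, h₁, mul_add]
  congr 1
  · rw [partialFractionHalf, mul_sum]
    exact sum_congr rfl fun p _ => by ring
  · rw [partialFractionHalf, mul_sum, add_comm L K]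
    refine sum_congr rfl fun p _ => ?_
    have e₁ : n + q + a = n + a + q := by ring
    have e₂ : q + n + a = n + a + q := by ring
    rw [e₁, e₂, add_comm q n]
    calc n⁻¹ ^ (M + 1) * ((p.2.choose K : ℝ) * (q⁻¹ ^ (p.1 + 1) * (n + a + q)⁻¹ ^ (p.2 + 1)))
        = (p.2.choose K : ℝ) * (n + a + q)⁻¹ ^ (p.2 + 1) *
            (n⁻¹ ^ (M + 1) * q⁻¹ ^ (p.1 + 1)) := by ring
      _ = _ := by
        rw [h₂, partialFractionHalf, partialFractionHalf, add_comm p.1 M, ← sum_add_distrib,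
          mul_sum]
        exact sum_congr rfl fun w _ => by ring

/-- The summand of the triple zeta value at gaps `x, y, z`. -/
noncomputable def mzv3Summand (a b c : ℕ) (x y z : ℕ+) : ℝ≥0∞ :=
  ENNReal.ofReal ((x : ℝ)⁻¹ ^ a * ((x : ℝ) + y)⁻¹ ^ b * ((x : ℝ) + y + z)⁻¹ ^ c)

lemma tsum_mzv3Summand (a b c : ℕ) :
    ∑' p : ℕ+ × ℕ+ × ℕ+, mzv3Summand a b c p.1 p.2.1 p.2.2 = emzv3 a b c := rfl

lemma tsum_mzv3Summand_swap (a b c : ℕ) :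
    ∑' p : ℕ+ × ℕ+ × ℕ+, mzv3Summand a b c p.1 p.2.2 p.2.1 = emzv3 a b c :=
  ((Equiv.refl ℕ+).prodCongr (Equiv.prodComm ℕ+ ℕ+)).tsum_eq
    fun p => mzv3Summand a b c p.1 p.2.1 p.2.2

lemma tsum_mzv3Summand_rotate (a b c : ℕ) :
    ∑' p : ℕ+ × ℕ+ × ℕ+, mzv3Summand a b c p.2.2 p.1 p.2.1 = emzv3 a b c :=
  ((Equiv.prodAssoc ℕ+ ℕ+ ℕ+).symm.trans (Equiv.prodComm (ℕ+ × ℕ+) ℕ+)).tsum_eq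
    fun p => mzv3Summand a b c p.1 p.2.1 p.2.2

open Finset in
lemma emzv2_mul_ezeta (M K L : ℕ) :
    emzv2 (M + 1) (K + 1) * ezeta (L + 1) =
      ∑ p ∈ antidiagonal (K + L), (p.2.choose L : ℝ≥0∞) * emzv3 (M + 1) (p.1 + 1) (p.2 + 1) +
        ∑ p ∈ antidiagonal (K + L), ∑ w ∈ antidiagonal (M + p.1),
          ((p.2.choose K * w.2.choose p.1 : ℝ≥0∞) * emzv3 (w.1 + 1) (w.2 + 1) (p.2 + 1) +
            (p.2.choose K * w.2.choose M : ℝ≥0∞) * emzv3 (w.1 + 1) (w.2 + 1) (p.2 + 1)) := by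
  have hL : emzv2 (M + 1) (K + 1) * ezeta (L + 1) = ∑' p : ℕ+ × ℕ+ × ℕ+,
      ENNReal.ofReal ((p.1 : ℝ)⁻¹ ^ (M + 1) * ((p.1 : ℝ) + p.2.1)⁻¹ ^ (K + 1) *
        (p.2.2 : ℝ)⁻¹ ^ (L + 1)) := by
    rw [← (Equiv.prodAssoc ℕ+ ℕ+ ℕ+).tsum_eq, ENNReal.tsum_prod', emzv2, ezeta,
      ← ENNReal.tsum_mul_right]
    refine tsum_congr fun p => ?_
    rw [← ENNReal.tsum_mul_left]
    exact tsum_congr fun q => (ENNReal.ofReal_mul (by positivity)).symm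
  have hterm : ∀ p : ℕ+ × ℕ+ × ℕ+,
      ENNReal.ofReal ((p.1 : ℝ)⁻¹ ^ (M + 1) * ((p.1 : ℝ) + p.2.1)⁻¹ ^ (K + 1) *
        (p.2.2 : ℝ)⁻¹ ^ (L + 1)) =
      ∑ r ∈ antidiagonal (K + L),
          (r.2.choose L : ℝ≥0∞) * mzv3Summand (M + 1) (r.1 + 1) (r.2 + 1) p.1 p.2.1 p.2.2 +
        ∑ r ∈ antidiagonal (K + L), ∑ w ∈ antidiagonal (M + r.1),
          ((r.2.choose K * w.2.choose r.1 : ℝ≥0∞) *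
              mzv3Summand (w.1 + 1) (w.2 + 1) (r.2 + 1) p.1 p.2.2 p.2.1 +
            (r.2.choose K * w.2.choose M : ℝ≥0∞) *
              mzv3Summand (w.1 + 1) (w.2 + 1) (r.2 + 1) p.2.2 p.1 p.2.1) := by
    intro p
    have hc : ∀ m : ℕ, (m : ℝ≥0∞) = ENNReal.ofReal m := fun m => (ENNReal.ofReal_natCast m).symm
    have hc₂ : ∀ (m m' : ℕ) (x : ℝ), ENNReal.ofReal (m * m' * x) = m * m' * ENNReal.ofReal x :=
      fun m m' x => by
        rw [ENNReal.ofReal_mul (by positivity), ENNReal.ofReal_mul (by positivity), hc, hc]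
    rw [mzv_summand_expansion (by positivity) (by positivity) (by positivity),
      ENNReal.ofReal_add (by positivity) (by positivity),
      ENNReal.ofReal_sum_of_nonneg fun _ _ => by positivity,
      ENNReal.ofReal_sum_of_nonneg fun _ _ => by positivity]
    congr 1
    · refine sum_congr rfl fun r _ => ?_
      rw [ENNReal.ofReal_mul (by positivity), hc, mzv3Summand]
    · refine sum_congr rfl fun r _ => ?_
      rw [ENNReal.ofReal_sum_of_nonneg fun _ _ => by positivity]
      refine sum_congr rfl fun w _ => ?_
      rw [ENNReal.ofReal_add (by positivity) (by positivity), hc₂, hc₂, mzv3Summand, mzv3Summand]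
  rw [hL, tsum_congr hterm, ENNReal.tsum_add, Summable.tsum_finsetSum fun _ _ => ENNReal.summable,
    Summable.tsum_finsetSum fun _ _ => ENNReal.summable]
  congr 1
  · exact sum_congr rfl fun r _ => by rw [ENNReal.tsum_mul_left, tsum_mzv3Summand]
  · refine sum_congr rfl fun r _ => ?_
    rw [Summable.tsum_finsetSum fun _ _ => ENNReal.summable]
    refine sum_congr rfl fun w _ => ?_
    rw [ENNReal.tsum_add, ENNReal.tsum_mul_left, ENNReal.tsum_mul_left, tsum_mzv3Summand_swap,
      tsum_mzv3Summand_rotate]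

open Finset in
lemma mzv2_mul_zetaVal {M K L : ℕ} (hK : 1 ≤ K) (hL : 1 ≤ L) :
    mzv2 (M + 1) (K + 1) * zetaVal (L + 1) =
      ∑ p ∈ antidiagonal (K + L), (p.2.choose L : ℝ) * mzv3 (M + 1) (p.1 + 1) (p.2 + 1) +
        ∑ p ∈ antidiagonal (K + L), ∑ w ∈ antidiagonal (M + p.1),
          (p.2.choose K : ℝ) * ((w.2.choose p.1 : ℝ) + (w.2.choose M : ℝ)) *
            mzv3 (w.1 + 1) (w.2 + 1) (p.2 + 1) := by
  have hfin : emzv2 (M + 1) (K + 1) * ezeta (L + 1) ≠ ∞ :=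
    ENNReal.mul_ne_top (emzv2_ne_top (by omega) (by omega)) (ezeta_ne_top (by omega))
  have h := emzv2_mul_ezeta M K L
  rw [h] at hfin
  obtain ⟨hf₁, hf₂⟩ := ENNReal.add_ne_top.1 hfin
  have hg₁ := ENNReal.sum_ne_top.1 hf₁
  have hg₂ := ENNReal.sum_ne_top.1 hf₂
  rw [mzv2_eq_toReal, zetaVal_eq_toReal, ← ENNReal.toReal_mul, h, ENNReal.toReal_add hf₁ hf₂,
    ENNReal.toReal_sum hg₁, ENNReal.toReal_sum hg₂]
  congr 1
  · exact sum_congr rfl fun p _ => by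
      rw [ENNReal.toReal_mul, ENNReal.toReal_natCast, mzv3_eq_toReal]
  · refine sum_congr rfl fun p hp => ?_
    have hg₃ := ENNReal.sum_ne_top.1 (hg₂ p hp)
    rw [ENNReal.toReal_sum hg₃]
    refine sum_congr rfl fun w hw => ?_
    obtain ⟨hx, hy⟩ := ENNReal.add_ne_top.1 (hg₃ w hw)
    rw [ENNReal.toReal_add hx hy]
    simp only [ENNReal.toReal_mul, ENNReal.toReal_natCast, mzv3_eq_toReal]
    ring

/-- Guo–Xie: for `k₁ ≥ 1`, `k₂, ℓ ≥ 2`,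
`ζ(k₁,k₂)·ζ(ℓ) = Σ_{i₁≥1, i₂≥2, i₁+i₂=k₂+ℓ} C(i₂-1, ℓ-1)·ζ(k₁, i₁, i₂)`
`+ Σ_{i₁,i₂≥1, i₃≥2, i₁+i₂+i₃=k₁+k₂+ℓ} C(i₃-1, k₂-1)·[C(i₂-1, k₁-i₁) + C(i₂-1, k₁-1)]·ζ(i₁,i₂,i₃)`
(with `C(n,r) = 0` when `r < 0`). -/
theorem guo_xie (k₁ k₂ l : ℕ) (h₁ : 1 ≤ k₁) (h₂ : 2 ≤ k₂) (hl : 2 ≤ l) :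
    mzv2 k₁ k₂ * zetaVal l =
      (∑ i₁ ∈ Finset.Icc 1 (k₂ + l - 2),
        (Nat.choose (k₂ + l - i₁ - 1) (l - 1) : ℝ) * mzv3 k₁ i₁ (k₂ + l - i₁))
      + ∑ i₁ ∈ Finset.Icc 1 (k₁ + k₂ + l), ∑ i₂ ∈ Finset.Icc 1 (k₁ + k₂ + l),
          if 2 ≤ k₁ + k₂ + l - i₁ - i₂ then
            (Nat.choose (k₁ + k₂ + l - i₁ - i₂ - 1) (k₂ - 1) : ℝ)
              * ((if i₁ ≤ k₁ then (Nat.choose (i₂ - 1) (k₁ - i₁) : ℝ) else 0)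
                  + (Nat.choose (i₂ - 1) (k₁ - 1) : ℝ))
              * mzv3 i₁ i₂ (k₁ + k₂ + l - i₁ - i₂)
          else 0 := by
  obtain ⟨M, rfl⟩ := Nat.exists_eq_add_of_le' h₁
  obtain ⟨K, rfl⟩ := Nat.exists_eq_add_of_le' (show 1 ≤ k₂ by omega)
  obtain ⟨L, rfl⟩ := Nat.exists_eq_add_of_le' (show 1 ≤ l by omega)
  rw [mzv2_mul_zetaVal (by omega) (by omega)]
  congr 1
  · symm
    refine Finset.sum_of_injOn (fun i => (i - 1, K + L + 1 - i)) ?_ ?_ ?_ ?_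
    · intro i hi j hj hij
      simp only [Finset.coe_Icc, Set.mem_Icc, Prod.mk.injEq] at hi hj hij
      omega
    · intro i hi
      simp only [Finset.coe_Icc, Set.mem_Icc] at hi
      simp only [Finset.mem_coe, Finset.HasAntidiagonal.mem_antidiagonal]
      omega
    · rintro ⟨p, r⟩ hp hnot
      have hpr := Finset.HasAntidiagonal.mem_antidiagonal.1 hp
      simp only at hpr
      have hr : r = 0 := by
        by_contra hr
        refine hnot ⟨p + 1, ?_, ?_⟩
        · simp only [Finset.coe_Icc, Set.mem_Icc]
          omega
        · simp only [Prod.mk.injEq]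
          omega
      rw [hr, Nat.choose_eq_zero_of_lt (by omega)]
      simp
    · intro i hi
      rw [Finset.mem_Icc] at hi
      have e₁ : K + 1 + (L + 1) - i = K + L + 1 - i + 1 := by omega
      have e₂ : i - 1 + 1 = i := by omega
      simp only [e₁, e₂, Nat.add_sub_cancel]
  · rw [Finset.sum_sigma', ← Finset.sum_product']
    refine Finset.sum_of_injOn (fun x => (x.2.1 + 1, x.2.2 + 1)) ?_ ?_ ?_ ?_
    · rintro ⟨⟨p, r⟩, u, v⟩ hx ⟨⟨p', r'⟩, u', v'⟩ hy hxy
      simp only [Finset.mem_coe, Finset.mem_sigma, Finset.HasAntidiagonal.mem_antidiagonal,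
        Prod.mk.injEq] at hx hy hxy
      obtain ⟨rfl, rfl, rfl, rfl⟩ : p = p' ∧ r = r' ∧ u = u' ∧ v = v' := by omega
      rfl
    · rintro ⟨⟨p, r⟩, u, v⟩ hx
      simp only [Finset.mem_coe, Finset.mem_sigma, Finset.HasAntidiagonal.mem_antidiagonal] at hx
      simp only [Finset.mem_coe, Finset.mem_product, Finset.mem_Icc]
      omega
    · rintro ⟨i, j⟩ hij hnot
      simp only [Finset.mem_product, Finset.mem_Icc] at hij
      dsimp only
      have hlt (hN : 2 ≤ M + 1 + (K + 1) + (L + 1) - i - j) : i + j < M + 2 := by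
        by_contra hlt
        refine hnot ⟨⟨(i + j - 2 - M, M + K + L + 2 - i - j), (i - 1, j - 1)⟩, ?_, ?_⟩
        · simp only [Finset.mem_coe, Finset.mem_sigma, Finset.HasAntidiagonal.mem_antidiagonal]
          omega
        · simp only [Prod.mk.injEq]
          omega
      split_ifs with hN hi
      · have := hlt hN
        rw [Nat.choose_eq_zero_of_lt (show j - 1 < M + 1 - i by omega),
          Nat.choose_eq_zero_of_lt (show j - 1 < M + 1 - 1 by omega)]
        simp
      · have := hlt hN
        omega
      · rfl
    · rintro ⟨⟨p, r⟩, u, v⟩ hx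
      simp only [Finset.mem_sigma, Finset.HasAntidiagonal.mem_antidiagonal] at hx
      obtain ⟨hpr, huv⟩ := hx
      have e : M + 1 + (K + 1) + (L + 1) - (u + 1) - (v + 1) = r + 1 := by omega
      have hch : (if u + 1 ≤ M + 1 then (Nat.choose v (M - u) : ℝ) else 0) = v.choose p := by
        split_ifs with hu
        · rw [← Nat.choose_symm_of_eq_add (show v = p + (M - u) by omega)]
        · rw [Nat.choose_eq_zero_of_lt (show v < p by omega), Nat.cast_zero]
      simp only [e, Nat.add_sub_cancel, Nat.add_sub_add_right, hch]
      split_ifs with hr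
      · rfl
      · rw [Nat.choose_eq_zero_of_lt (show r < K by omega)]
        simp
end

section
/- Integral representation of the hook Schur multiple zeta value: for integers k₂,…,k_r ≥ 1 with k_r ≥ 2, Σ over a ≤ b₂ ≤ ⋯ ≤ b_r, a < c (positive integers) of 1/(a · ∏_{j=2}^r b_j^{k_j} · c²) equals the iterated integral ∫_0^1 (dz₁/z₁) ∫_0^{z₁} (dz₂/(1−z₂)) ∫_0^{z₂} (dz₃/(1−z₃)) Σ_{b₂ ≤ ⋯ ≤ b_r} (1 − z₃^{b₂})/(b₂^{k₂} ⋯ b_r^{k_r}). -/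
open MeasureTheory

/-- The coordinatewise product of a summable nonnegative function is summable on tuples. -/
theorem summable_prod_fin_of_nonneg {α : Type*} {f : α → ℝ} (hf : Summable f)
    (h0 : ∀ x, 0 ≤ f x) (n : ℕ) : Summable fun b : Fin n → α => ∏ j, f (b j) := by
  induction n with
  | zero => exact Summable.of_finite
  | succ n ih =>
    have h := hf.mul_of_nonneg ih h0 fun b => Finset.prod_nonneg fun j _ => h0 (b j)
    refine (Fin.consEquiv fun _ : Fin (n + 1) => α).summable_iff.mp (h.congr fun x => ?_)
    simp [Fin.consEquiv, Fin.prod_univ_succ]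

/-- Convergence of the multiple zeta star series. -/
theorem summable_monotone_prod_pow_inv (n : ℕ) (hn : 0 < n) (k : Fin n → ℕ)
    (hk : ∀ j, 1 ≤ k j) {l : Fin n} (hl : ∀ j, j ≤ l) (hlast : 2 ≤ k l) :
    Summable fun b : {b : Fin n → ℕ // Monotone b ∧ 0 < b ⟨0, hn⟩} =>
      (∏ j, ((b : Fin n → ℕ) j : ℝ) ^ k j)⁻¹ := by
  have hn' : (0 : ℝ) < n := by exact_mod_cast hn
  have hs : Summable fun m : ℕ => ((m : ℝ) ^ (1 + 1 / n : ℝ))⁻¹ :=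
    Real.summable_nat_rpow_inv.mpr (by linarith [one_div_pos.mpr hn'])
  have hp := (summable_prod_fin_of_nonneg hs (fun m => by positivity) n).subtype
    {b : Fin n → ℕ | Monotone b ∧ 0 < b ⟨0, hn⟩}
  refine Summable.of_nonneg_of_le (fun b => by positivity) (fun b => ?_) hp
  obtain ⟨b, hb, hb0⟩ := b
  have hpos : ∀ j, 1 ≤ b j := fun j => hb0.trans_le (hb (Fin.mk_le_of_le_val (Nat.zero_le _)))
  have hpos' : ∀ j, (1 : ℝ) ≤ b j := fun j => by exact_mod_cast hpos j
  have hpos0 : ∀ j, (0 : ℝ) < b j := fun j => one_pos.trans_le (hpos' j)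
  have hle : ∀ j, (b j : ℝ) ≤ b l := fun j => by exact_mod_cast hb (hl j)
  simp only [Function.comp_apply, Finset.prod_inv_distrib]
  refine inv_anti₀ (Finset.prod_pos fun j _ => Real.rpow_pos_of_pos (hpos0 j) _) ?_
  calc ∏ j, (b j : ℝ) ^ (1 + 1 / n : ℝ)
      = (∏ j, (b j : ℝ)) * ∏ j, (b j : ℝ) ^ (1 / n : ℝ) := by
        rw [← Finset.prod_mul_distrib]
        exact Finset.prod_congr rfl fun j _ => by rw [Real.rpow_add (hpos0 j), Real.rpow_one]
    _ ≤ (∏ j, (b j : ℝ)) * ∏ _j : Fin n, (b l : ℝ) ^ (1 / n : ℝ) := by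
        refine mul_le_mul_of_nonneg_left (Finset.prod_le_prod (fun j _ => by positivity)
          fun j _ => Real.rpow_le_rpow (hpos0 j).le (hle j) (by positivity))
          (Finset.prod_nonneg fun j _ => (hpos0 j).le)
    _ = (∏ j, (b j : ℝ)) * b l := by
        rw [Finset.prod_const, Finset.card_univ, Fintype.card_fin, one_div,
          Real.rpow_inv_natCast_pow (hpos0 l).le hn.ne']
    _ = ∏ j, ((b j : ℝ) * if j = l then (b l : ℝ) else 1) := by
        rw [Finset.prod_mul_distrib, Finset.prod_ite_eq' Finset.univ l, if_pos (Finset.mem_univ l)]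
    _ ≤ ∏ j, (b j : ℝ) ^ k j := by
        refine Finset.prod_le_prod (fun j _ => ?_) fun j _ => ?_
        · split_ifs <;> positivity
        · split_ifs with h
          · subst h
            rw [← sq]
            exact pow_le_pow_right₀ (hpos' _) hlast
          · rw [mul_one]
            exact le_self_pow₀ (hpos' j) (by have := hk j; omega)

theorem lintegral_Ioo_zero_pow {t : ℝ} (ht : 0 ≤ t) (n : ℕ) :
    ∫⁻ x in Set.Ioo 0 t, ENNReal.ofReal (x ^ n) = ENNReal.ofReal (t ^ (n + 1) / (n + 1)) := by
  rw [← ofReal_integral_eq_lintegral_ofReal, ← integral_Ioc_eq_integral_Ioo,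
    ← intervalIntegral.integral_of_le ht, integral_pow]
  · simp
  · exact ((continuous_pow n).integrableOn_Icc).mono_set Set.Ioo_subset_Icc_self
  · filter_upwards [ae_restrict_mem measurableSet_Ioo] with x hx using pow_nonneg hx.1.le n

theorem measurableSet_descending_simplex : MeasurableSet
    {z : ℝ × ℝ × ℝ | 0 < z.2.2 ∧ z.2.2 < z.2.1 ∧ z.2.1 < z.1 ∧ z.1 < 1} := by
  measurability

theorem lintegral_descending_simplex_monomial (i m : ℕ) :
    ∫⁻ z in {z : ℝ × ℝ × ℝ | 0 < z.2.2 ∧ z.2.2 < z.2.1 ∧ z.2.1 < z.1 ∧ z.1 < 1},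
      ENNReal.ofReal (z.1⁻¹ * z.2.1 ^ m * z.2.2 ^ i) =
    ENNReal.ofReal (((i + 1 : ℝ) * (i + 1 + m + 1 : ℝ) ^ 2)⁻¹) := by
  set S := {z : ℝ × ℝ × ℝ | 0 < z.2.2 ∧ z.2.2 < z.2.1 ∧ z.2.1 < z.1 ∧ z.1 < 1}
  have hS : MeasurableSet S := measurableSet_descending_simplex
  have hmeas : Measurable (S.indicator fun z : ℝ × ℝ × ℝ =>
      ENNReal.ofReal (z.1⁻¹ * z.2.1 ^ m * z.2.2 ^ i)) := by
    refine Measurable.indicator ?_ hS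
    fun_prop
  have h3 : ∀ x y : ℝ, ∫⁻ w, S.indicator (fun z : ℝ × ℝ × ℝ =>
        ENNReal.ofReal (z.1⁻¹ * z.2.1 ^ m * z.2.2 ^ i)) (x, y, w) =
      (Set.Ioo 0 1).indicator (fun x => (Set.Ioo 0 x).indicator (fun y =>
        ENNReal.ofReal (x⁻¹ / (i + 1)) * ENNReal.ofReal (y ^ (i + 1 + m))) y) x := by
    intro x y
    by_cases hxy : x ∈ Set.Ioo (0 : ℝ) 1 ∧ y ∈ Set.Ioo 0 x
    · obtain ⟨hx, hy⟩ := hxy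
      have hx0 := hx.1
      have hy0 := hy.1
      rw [Set.indicator_of_mem hx, Set.indicator_of_mem hy]
      have : (fun w => S.indicator (fun z : ℝ × ℝ × ℝ =>
          ENNReal.ofReal (z.1⁻¹ * z.2.1 ^ m * z.2.2 ^ i)) (x, y, w)) =
          (Set.Ioo 0 y).indicator fun w =>
            ENNReal.ofReal (x⁻¹ * y ^ m) * ENNReal.ofReal (w ^ i) := by
        ext w
        by_cases hw : w ∈ Set.Ioo 0 y
        · rw [Set.indicator_of_mem hw,
            Set.indicator_of_mem (show (x, y, w) ∈ S from ⟨hw.1, hw.2, hy.2, hx.2⟩),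
            ← ENNReal.ofReal_mul (by positivity)]
        · rw [Set.indicator_of_notMem hw, Set.indicator_of_notMem fun h => hw ⟨h.1, h.2.1⟩]
      rw [this, lintegral_indicator measurableSet_Ioo, lintegral_const_mul _ (by fun_prop),
        lintegral_Ioo_zero_pow hy0.le, ← ENNReal.ofReal_mul (by positivity),
        ← ENNReal.ofReal_mul (by positivity)]
      congr 1
      ring
    · have : ∀ w, S.indicator (fun z : ℝ × ℝ × ℝ =>
          ENNReal.ofReal (z.1⁻¹ * z.2.1 ^ m * z.2.2 ^ i)) (x, y, w) = 0 := fun w =>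
        Set.indicator_of_notMem (fun h => by
          obtain ⟨h1, h2, h3, h4⟩ := h
          dsimp only at h1 h2 h3 h4
          exact hxy ⟨⟨by linarith, h4⟩, by linarith, h3⟩) _
      simp only [this, lintegral_zero]
      by_cases hx : x ∈ Set.Ioo (0 : ℝ) 1
      · rw [Set.indicator_of_mem hx, Set.indicator_of_notMem fun hy => hxy ⟨hx, hy⟩]
      · rw [Set.indicator_of_notMem hx]
  have h2 : ∀ x : ℝ, ∫⁻ y, (Set.Ioo 0 1).indicator (fun x => (Set.Ioo 0 x).indicator (fun y =>
        ENNReal.ofReal (x⁻¹ / (i + 1)) * ENNReal.ofReal (y ^ (i + 1 + m))) y) x =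
      (Set.Ioo 0 1).indicator (fun x => ENNReal.ofReal ((i + 1 : ℝ) * (i + 1 + m + 1 : ℝ))⁻¹ *
        ENNReal.ofReal (x ^ (i + 1 + m))) x := by
    intro x
    by_cases hx : x ∈ Set.Ioo (0 : ℝ) 1
    · have hx0 := hx.1
      simp only [Set.indicator_of_mem hx]
      rw [lintegral_indicator measurableSet_Ioo, lintegral_const_mul _ (by fun_prop),
        lintegral_Ioo_zero_pow hx0.le, ← ENNReal.ofReal_mul (by positivity),
        ← ENNReal.ofReal_mul (by positivity)]
      congr 1
      push_cast
      field_simp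
      ring
    · simp only [Set.indicator_of_notMem hx, lintegral_zero]
  rw [← lintegral_indicator hS, Measure.volume_eq_prod, lintegral_prod _ hmeas.aemeasurable]
  have h1 : ∀ x : ℝ, ∫⁻ p : ℝ × ℝ, S.indicator (fun z : ℝ × ℝ × ℝ =>
        ENNReal.ofReal (z.1⁻¹ * z.2.1 ^ m * z.2.2 ^ i)) (x, p) =
      (Set.Ioo 0 1).indicator (fun x => ENNReal.ofReal ((i + 1 : ℝ) * (i + 1 + m + 1 : ℝ))⁻¹ *
        ENNReal.ofReal (x ^ (i + 1 + m))) x := fun x => by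
    refine (lintegral_prod _ (hmeas.comp measurable_prodMk_left).aemeasurable).trans ?_
    simp only [Function.comp_apply, h3, h2]
  simp only [h1]
  rw [lintegral_indicator measurableSet_Ioo, lintegral_const_mul _ (by fun_prop),
    lintegral_Ioo_zero_pow zero_le_one, ← ENNReal.ofReal_mul (by positivity)]
  congr 1
  push_cast
  field_simp
  simp

/-- Hook fillings of shape `(n + 1, 1)`, parametrised by the tail `b` of the first row, the corner
`i + 1 ≤ b 0`, and the excess `m` of the box below the corner. -/
def hookFillingEquiv (n : ℕ) (hn : 0 < n) :
    (Σ b : {b : Fin n → ℕ // Monotone b ∧ 0 < b ⟨0, hn⟩},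
      Fin ((b : Fin n → ℕ) ⟨0, hn⟩) × ℕ) ≃
    {x : (ℕ × ℕ) × (Fin n → ℕ) //
      0 < x.1.1 ∧ x.1.1 < x.1.2 ∧ Monotone x.2 ∧ ∀ j, x.1.1 ≤ x.2 j} where
  toFun s := ⟨((s.2.1 + 1, s.2.1 + 1 + s.2.2 + 1), s.1), by
    refine ⟨Nat.succ_pos _, by dsimp only; omega, s.1.2.1, fun j => ?_⟩
    exact (Nat.succ_le_of_lt s.2.1.2).trans (s.1.2.1 (Fin.mk_le_of_le_val (Nat.zero_le _)))⟩
  invFun x := ⟨⟨x.1.2, x.2.2.2.1, x.2.1.trans_le (x.2.2.2.2 _)⟩,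
    ⟨x.1.1.1 - 1, by have := x.2.1; have := x.2.2.2.2 ⟨0, hn⟩; dsimp only; omega⟩,
    x.1.1.2 - x.1.1.1 - 1⟩
  left_inv := by
    rintro ⟨b, i, m⟩
    simp only [Nat.add_sub_cancel, Fin.eta, Sigma.mk.injEq, heq_eq_eq, Prod.mk.injEq, true_and]
    omega
  right_inv := by
    rintro ⟨⟨⟨a, c⟩, b⟩, ha, hc, hb⟩
    dsimp only at ha hc
    simp only [Subtype.mk.injEq, Prod.mk.injEq, and_true]
    omega

theorem tsum_ofReal_geom {y z C : ℝ} (hC : 0 ≤ C) (hy0 : 0 ≤ y) (hy1 : y < 1) (hz0 : 0 ≤ z)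
    (hz1 : z < 1) (N : ℕ) :
    ∑' p : Fin N × ℕ, ENNReal.ofReal (C * (y ^ p.2 * z ^ (p.1 : ℕ))) =
      ENNReal.ofReal (C * ((1 - y)⁻¹ * ((1 - z)⁻¹ * (1 - z ^ N)))) := by
  have hm : ∀ i : Fin N, ∑' m : ℕ, ENNReal.ofReal (C * (y ^ m * z ^ (i : ℕ))) =
      ENNReal.ofReal (C * (1 - y)⁻¹ * z ^ (i : ℕ)) := fun i => by
    rw [← ENNReal.ofReal_tsum_of_nonneg (fun m => by positivity)
      (((summable_geometric_of_lt_one hy0 hy1).mul_right _).mul_left _), tsum_mul_left,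
      tsum_mul_right, tsum_geometric_of_lt_one hy0 hy1, mul_assoc]
  have hy : 0 ≤ (1 - y)⁻¹ := inv_nonneg.mpr (by linarith)
  rw [ENNReal.tsum_prod', tsum_fintype]
  simp only [hm]
  rw [← ENNReal.ofReal_sum_of_nonneg fun i _ => by positivity, ← Finset.mul_sum,
    Fin.sum_univ_eq_sum_range (fun i => z ^ i) N, geom_sum_eq hz1.ne]
  congr 1
  rw [← neg_div_neg_eq, neg_sub, neg_sub]
  ring

/-- Integral representation of the hook Schur multiple zeta value:
for `k₂,…,k_r ≥ 1`, `k_r ≥ 2`,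
`Σ_{a ≤ b₂ ≤ ⋯ ≤ b_r, a < c} 1/(a ∏ b_j^{k_j} c²)` equals the iterated integral
`∫₀¹ dz₁/z₁ ∫₀^{z₁} dz₂/(1−z₂) ∫₀^{z₂} dz₃/(1−z₃) Σ_{b₂ ≤ ⋯ ≤ b_r} (1 − z₃^{b₂})/∏ b_j^{k_j}`. -/
theorem integral_representation_hook (n : ℕ) (hn : 0 < n) (k : Fin n → ℕ)
    (hk : ∀ j, 1 ≤ k j) (hlast : 2 ≤ k ⟨n - 1, by omega⟩) :
    (∑' x : {x : (ℕ × ℕ) × (Fin n → ℕ) //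
        0 < x.1.1 ∧ x.1.1 < x.1.2 ∧ Monotone x.2 ∧ ∀ j, x.1.1 ≤ x.2 j},
      ((x.1.1.1 : ℝ) * (∏ j, ((x.1.2 j : ℝ)) ^ (k j)) * (x.1.1.2 : ℝ) ^ 2)⁻¹) =
    ∫ z in {z : ℝ × ℝ × ℝ | 0 < z.2.2 ∧ z.2.2 < z.2.1 ∧ z.2.1 < z.1 ∧ z.1 < 1},
      (z.1)⁻¹ * (1 - z.2.1)⁻¹ * (1 - z.2.2)⁻¹ *
        ∑' b : {b : Fin n → ℕ // Monotone b ∧ 0 < b ⟨0, hn⟩},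
          (1 - z.2.2 ^ ((b : Fin n → ℕ) ⟨0, hn⟩)) * (∏ j, (((b : Fin n → ℕ) j : ℝ)) ^ (k j))⁻¹ := by
  have hsum := summable_monotone_prod_pow_inv n hn k hk
    (fun j => Fin.le_def.mpr (Nat.le_sub_one_of_lt j.2)) hlast
  set S := {z : ℝ × ℝ × ℝ | 0 < z.2.2 ∧ z.2.2 < z.2.1 ∧ z.2.1 < z.1 ∧ z.1 < 1}
  have hS : MeasurableSet S := measurableSet_descending_simplex
  let G : ℝ × ℝ × ℝ → ENNReal := fun z =>
    ∑' s : Σ b : {b : Fin n → ℕ // Monotone b ∧ 0 < b ⟨0, hn⟩},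
        Fin ((b : Fin n → ℕ) ⟨0, hn⟩) × ℕ,
      ENNReal.ofReal ((∏ j, ((s.1 : Fin n → ℕ) j : ℝ) ^ k j)⁻¹) *
        ENNReal.ofReal (z.1⁻¹ * z.2.1 ^ s.2.2 * z.2.2 ^ (s.2.1 : ℕ))
  have hGmeas : Measurable G := Measurable.tsum fun s => by fun_prop
  have hG : ∀ z ∈ S, G z ≠ ⊤ ∧ (z.1)⁻¹ * (1 - z.2.1)⁻¹ * (1 - z.2.2)⁻¹ *
      ∑' b : {b : Fin n → ℕ // Monotone b ∧ 0 < b ⟨0, hn⟩},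
        (1 - z.2.2 ^ ((b : Fin n → ℕ) ⟨0, hn⟩)) *
          (∏ j, (((b : Fin n → ℕ) j : ℝ)) ^ (k j))⁻¹ = (G z).toReal := by
    rintro ⟨x, y, w⟩ ⟨hw0, hwy, hyx, hx1⟩
    dsimp only at hw0 hwy hyx hx1 ⊢
    have hx0 : 0 < x := by linarith
    have hy : 0 ≤ (1 - y)⁻¹ := inv_nonneg.mpr (by linarith)
    have hw : 0 ≤ (1 - w)⁻¹ := inv_nonneg.mpr (by linarith)
    have hpow : ∀ N : ℕ, 0 ≤ 1 - w ^ N := fun N =>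
      sub_nonneg.mpr (pow_le_one₀ hw0.le (by linarith))
    have hterm : ∀ b : {b : Fin n → ℕ // Monotone b ∧ 0 < b ⟨0, hn⟩},
        0 ≤ (1 - w ^ ((b : Fin n → ℕ) ⟨0, hn⟩)) * (∏ j, ((b : Fin n → ℕ) j : ℝ) ^ k j)⁻¹ :=
      fun b => mul_nonneg (hpow _) (by positivity)
    have hsum' : Summable fun b : {b : Fin n → ℕ // Monotone b ∧ 0 < b ⟨0, hn⟩} =>
        (1 - w ^ ((b : Fin n → ℕ) ⟨0, hn⟩)) * (∏ j, ((b : Fin n → ℕ) j : ℝ) ^ k j)⁻¹ :=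
      hsum.of_nonneg_of_le hterm fun b => mul_le_of_le_one_left (by positivity)
        (sub_le_self _ (by positivity))
    have key : G (x, y, w) = ENNReal.ofReal (x⁻¹ * (1 - y)⁻¹ * (1 - w)⁻¹ *
        ∑' b : {b : Fin n → ℕ // Monotone b ∧ 0 < b ⟨0, hn⟩},
          (1 - w ^ ((b : Fin n → ℕ) ⟨0, hn⟩)) *
            (∏ j, (((b : Fin n → ℕ) j : ℝ)) ^ (k j))⁻¹) := by
      rw [← tsum_mul_left, ENNReal.ofReal_tsum_of_nonneg
        (fun b => mul_nonneg (by positivity) (hterm b)) (hsum'.mul_left _)]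
      simp only [G]
      rw [ENNReal.tsum_sigma']
      refine tsum_congr fun b => ?_
      rw [show x⁻¹ * (1 - y)⁻¹ * (1 - w)⁻¹ * ((1 - w ^ ((b : Fin n → ℕ) ⟨0, hn⟩)) *
          (∏ j, (((b : Fin n → ℕ) j : ℝ)) ^ (k j))⁻¹) =
          ((∏ j, (((b : Fin n → ℕ) j : ℝ)) ^ (k j))⁻¹ * x⁻¹) *
            ((1 - y)⁻¹ * ((1 - w)⁻¹ * (1 - w ^ ((b : Fin n → ℕ) ⟨0, hn⟩)))) by ring,
        ← tsum_ofReal_geom (by positivity) (by linarith) (by linarith) hw0.le (by linarith)]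
      refine tsum_congr fun p => ?_
      rw [← ENNReal.ofReal_mul (by positivity)]
      congr 1
      ring
    refine ⟨key ▸ ENNReal.ofReal_ne_top, ?_⟩
    rw [key, ENNReal.toReal_ofReal (mul_nonneg (by positivity) (tsum_nonneg hterm))]
  rw [setIntegral_congr_fun hS fun z hz => (hG z hz).2,
    integral_toReal hGmeas.aemeasurable ((ae_restrict_iff' hS).mpr
      (ae_of_all _ fun z hz => (hG z hz).1.lt_top)),
    lintegral_tsum fun s => by fun_prop, ENNReal.tsum_toReal_eq]
  · rw [← (hookFillingEquiv n hn).tsum_eq]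
    refine tsum_congr fun s => ?_
    rw [lintegral_const_mul _ (by fun_prop), lintegral_descending_simplex_monomial,
      ← ENNReal.ofReal_mul (by positivity), ENNReal.toReal_ofReal (by positivity), ← mul_inv]
    congr 1
    simp only [hookFillingEquiv, Equiv.coe_fn_mk]
    push_cast
    ring
  · intro s
    rw [lintegral_const_mul _ (by fun_prop), lintegral_descending_simplex_monomial]
    exact ENNReal.mul_ne_top ENNReal.ofReal_ne_top ENNReal.ofReal_ne_top
end
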